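/- arXiv:2004.02520 — 2 statements merged into one kernel-verified Lean document; each statement's English description precedes it below -/
import Mathlib

section
/- (Abstract coarea inequality) Let (X,d_X), (Y,d_Y) be boundedly compact metric spaces and suppose there are β ≥ 0 and C ≥ 0 with H^β(E) ≤ C·diam(E)^β for all E ⊂ Y. Let u: X → Y be locally Lipschitz and set Lip₀(u) = lim_{ε→0} sup{d_Y(u(x),u(y))/d_X(x,y) : 0 < d_X(x,y) < ε}. Then for every α ≥ β and every Borel set A ⊂ X with H^α(A) < ∞, the function y ↦ H^{α-β}(u⁻¹(y) ∩ A) is H^β-measurable and ∫_Y H^{α-β}(u⁻¹(y) ∩ A) dH^β(y) ≤ C · Lip₀(u)^β · H^α(A). -/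
open MeasureTheory ENNReal

/-!
Covering `A` efficiently by sets `s n` of small diameter, the images `u (s n)` have diameter at most
`L * diam (s n)`, the fiber of `y` is covered by those `s n` whose image contains `y`, and
integrating `∑ diam (s n) ^ (α - β) * 1_{u (s n)}` gives the inequality by Fatou's lemma. Here `L`
is any number above the infinitesimal Lipschitz constant, to which it then decreases.

This limit is useless when it produces `0 * ∞`, and neither null sets of `X` nor the measurability
of the fiber measures are within its reach. For these one uses Eilenberg's inequality in weak form,
`t * μH[β] {y | t < μH[α - β] (u ⁻¹' {y} ∩ A)} ≤ (3 * L) ^ β * μH[α] A`, which asks nothing of `Y`.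
The images `u (s n)` with the weights `diam (s n) ^ (α - β)` cover that superlevel set with total
weight more than `t` at each point, and have to be thinned out to an honest cover. To this end each
image books a set of times in `[0, t]` of measure at most its weight, larger images first, disjoint
from those of the images it meets. At a suitable time `τ` the images using `τ` cost no more than on
average. Each point lies in an image that was denied part of its booking, which therefore uses `τ`
itself or meets a larger image that does; so tripling the images that use `τ` gives the cover.

As a consequence almost all fibers of a null set of `X` are null, and measurability reduces to
compact `A`, where the covers of a fiber by open sets are also covers of the nearby fibers.
-/

open Filter Set Metric Topology NNReal

lemma lipschitzWith_volume_inter_Iic {V : Set ℝ} (hV : volume V ≠ ⊤) :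
    LipschitzWith 1 fun s => volume.real (V ∩ Iic s) := by
  refine LipschitzWith.of_le_add fun x y => ?_
  have hsub : V ∩ Iic x ⊆ (V ∩ Iic y) ∪ Ioc y x := fun z hz =>
    (le_or_gt z y).imp (fun h => ⟨hz.1, h⟩) fun h => ⟨h, hz.2⟩
  calc volume.real (V ∩ Iic x)
      ≤ volume.real ((V ∩ Iic y) ∪ Ioc y x) :=
        measureReal_mono hsub (measure_union_ne_top
          (ne_top_of_le_ne_top hV (measure_mono inter_subset_left)) measure_Ioc_lt_top.ne)
    _ ≤ volume.real (V ∩ Iic y) + volume.real (Ioc y x) := measureReal_union_le _ _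
    _ ≤ volume.real (V ∩ Iic y) + dist x y := by
        rw [Real.volume_real_Ioc, Real.dist_eq]
        gcongr
        exact max_le (le_abs_self _) (abs_nonneg _)

lemma exists_measurableSet_subset_volume_eq {a b : ℝ} {V : Set ℝ} (hV : MeasurableSet V)
    (hVab : V ⊆ Icc a b) {c : ℝ≥0∞} (hc : c ≤ volume V) :
    ∃ T ⊆ V, MeasurableSet T ∧ volume T = c := by
  have hfin : volume V ≠ ⊤ := ne_top_of_le_ne_top measure_Icc_lt_top.ne (measure_mono hVab)
  let f : ℝ → ℝ := fun s => volume.real (V ∩ Iic s)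
  have hfa : f a = 0 := by
    refine (measureReal_eq_zero_iff (by finiteness)).2 (measure_mono_null (t := {a}) ?_ (by simp))
    exact fun z hz => le_antisymm hz.2 (hVab hz.1).1
  have hfb : f b = volume.real V := by
    simp only [f, inter_eq_left.2 fun _ hz => mem_Iic.2 (hVab hz).2]
  obtain ⟨s, hs⟩ : c.toReal ∈ range f :=
    mem_range_of_exists_le_of_exists_ge (lipschitzWith_volume_inter_Iic hfin).continuous
      ⟨a, hfa.trans_le toReal_nonneg⟩ ⟨b, (toReal_mono hfin hc).trans_eq hfb.symm⟩
  refine ⟨V ∩ Iic s, inter_subset_left, hV.inter measurableSet_Iic, ?_⟩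
  exact (toReal_eq_toReal_iff' (by finiteness) (ne_top_of_le_ne_top hfin hc)).1 hs

/- Time slots are handed out greedily along `q`: `j` takes up to `c j` units of the time that its
predecessors have left free. -/
lemma exists_greedy_schedule {ι : Type*} [Countable ι] {q : ι → ι → Prop} (hq : WellFounded q)
    (c : ι → ℝ≥0∞) (a b : ℝ) :
    ∃ T : ι → Set ℝ, (∀ j, MeasurableSet (T j) ∧ T j ⊆ Icc a b ∧ volume (T j) ≤ c j) ∧
      (∀ i j, q i j → Disjoint (T i) (T j)) ∧
      ∀ j, volume (T j) = c j ∨ ∀ τ ∈ Icc a b, τ ∈ T j ∨ ∃ i, q i j ∧ τ ∈ T i := by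
  have hslot : ∀ (V : {V : Set ℝ // MeasurableSet V}) (r : ℝ≥0∞), ∃ T : {T // MeasurableSet T},
      T.1 ⊆ Icc a b \ V ∧ volume T.1 ≤ r ∧ (volume T.1 = r ∨ Icc a b \ V ⊆ T.1) := by
    intro V r
    have hfree : MeasurableSet (Icc a b \ V) := measurableSet_Icc.diff V.2
    rcases le_total r (volume (Icc a b \ V)) with hr | hr
    · obtain ⟨T, hTsub, hT, hTr⟩ := exists_measurableSet_subset_volume_eq hfree sdiff_subset hr
      exact ⟨⟨T, hT⟩, hTsub, hTr.le, Or.inl hTr⟩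
    · exact ⟨⟨_, hfree⟩, Subset.rfl, hr, Or.inr Subset.rfl⟩
  choose slot hslot_sub hslot_le hslot using hslot
  let busy : ∀ j, (∀ i, q i j → {T : Set ℝ // MeasurableSet T}) → {V : Set ℝ // MeasurableSet V} :=
    fun j F => ⟨⋃ (i) (h : q i j), F i h, .iUnion fun i => .iUnion fun h => (F i h).2⟩
  let T := hq.fix fun j F => slot (busy j F) (c j)
  have hT : ∀ j, T j = slot (busy j fun i _ => T i) (c j) := hq.fix_eq _
  have hsub : ∀ j, (T j).1 ⊆ Icc a b \ ⋃ (i) (_ : q i j), T i := fun j => by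
    rw [hT]
    exact hslot_sub _ _
  refine ⟨fun j => T j, fun j => ⟨(T j).2, (hsub j).trans sdiff_subset, ?_⟩, fun i j hij => ?_,
    fun j => ?_⟩
  · beta_reduce
    rw [hT]
    exact hslot_le _ _
  · exact Set.disjoint_left.2 fun τ hi hj => (hsub j hj).2 (mem_iUnion₂.2 ⟨i, hij, hi⟩)
  · have hfull : volume (T j).1 = c j ∨ Icc a b \ ⋃ (i) (_ : q i j), T i ⊆ (T j).1 := by
      rw [hT]
      exact hslot _ _
    refine hfull.imp_right fun h τ hτ => or_iff_not_imp_right.2 fun hfree => h ⟨hτ, ?_⟩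
    simpa using hfree

lemma lintegral_tsum_indicator_const {Ω ι : Type*} [MeasurableSpace Ω] [Countable ι]
    {μ : Measure Ω} {T : ι → Set Ω} (hT : ∀ j, MeasurableSet (T j)) (w : ι → ℝ≥0∞) :
    ∫⁻ x, ∑' j, (T j).indicator (fun _ => w j) x ∂μ = ∑' j, w j * μ (T j) := by
  rw [lintegral_tsum fun j => (measurable_const.indicator (hT j)).aemeasurable]
  simp_rw [lintegral_indicator_const (hT _)]

lemma exists_mem_mul_tsum_indicator_le {Ω ι : Type*} [MeasurableSpace Ω] [Countable ι]
    {μ : Measure Ω} {I : Set Ω} (hI0 : μ I ≠ 0) (hI : μ I ≠ ⊤) {T : ι → Set Ω}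
    (hT : ∀ j, MeasurableSet (T j)) (w : ι → ℝ≥0∞) :
    ∃ τ ∈ I, μ I * ∑' j, (T j).indicator (fun _ => w j) τ ≤ ∑' j, w j * μ (T j) := by
  obtain ⟨τ, hτ, hle⟩ := exists_le_setLAverage hI0 hI
    (f := fun τ => ∑' j, (T j).indicator (fun _ => w j) τ)
    (Measurable.tsum fun j => measurable_const.indicator (hT j)).aemeasurable
  refine ⟨τ, hτ, ?_⟩
  calc μ I * ∑' j, (T j).indicator (fun _ => w j) τ
      ≤ ∫⁻ τ in I, ∑' j, (T j).indicator (fun _ => w j) τ ∂μ := by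
        rw [setLAverage_eq] at hle
        exact (mul_le_mul_right hle _).trans ENNReal.mul_div_le
    _ = ∑' j, w j * μ.restrict I (T j) := lintegral_tsum_indicator_const hT w
    _ ≤ ∑' j, w j * μ (T j) :=
        ENNReal.tsum_le_tsum fun j => mul_le_mul_right (Measure.restrict_apply_le _ _) _

theorem exists_weighted_selection {ι Y : Type*} [Countable ι] (p : ι → ι → Prop)
    [IsWellOrder ι p] (S : ι → Set Y) (c w : ι → ℝ≥0∞) {t : ℝ≥0∞} (ht0 : t ≠ 0) (ht : t ≠ ⊤) :
    ∃ J : Set ι, t * ∑' j : J, w j ≤ ∑' j, w j * c j ∧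
      ∀ y, t < ∑' j, (S j).indicator (fun _ => c j) y →
        ∃ j, y ∈ S j ∧ ∃ i ∈ J, ¬ p j i ∧ (S i ∩ S j).Nonempty := by
  have hq : WellFounded fun i j => p i j ∧ (S i ∩ S j).Nonempty :=
    Subrelation.wf And.left (IsWellFounded.wf (r := p))
  obtain ⟨T, hT, hdisj, hfull⟩ := exists_greedy_schedule hq c 0 t.toReal
  have hvol : volume (Icc 0 t.toReal) = t := by simp [ht]
  obtain ⟨τ, hτ, hle⟩ := exists_mem_mul_tsum_indicator_le (hvol.trans_ne ht0) (hvol.trans_ne ht)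
    (fun j => (hT j).1) w
  refine ⟨{j | τ ∈ T j}, ?_, fun y hy => ?_⟩
  · rw [tsum_subtype {j | τ ∈ T j} w]
    calc t * ∑' j, {j | τ ∈ T j}.indicator w j
        = volume (Icc 0 t.toReal) * ∑' j, (T j).indicator (fun _ => w j) τ := by rw [hvol]; rfl
      _ ≤ ∑' j, w j * volume (T j) := hle
      _ ≤ ∑' j, w j * c j := by
          gcongr with j
          exact (hT j).2.2
  · obtain ⟨j, hyj, hj⟩ : ∃ j, y ∈ S j ∧ volume (T j) ≠ c j := by
      by_contra! hall
      have hdisj_y : Pairwise (Function.onFun Disjoint fun j : {j | y ∈ S j} => T j) := by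
        intro i j hij
        rcases trichotomous_of p (i : ι) j with h | h | h
        · exact hdisj _ _ ⟨h, y, i.2, j.2⟩
        · exact absurd (Subtype.ext h) hij
        · exact (hdisj _ _ ⟨h, y, j.2, i.2⟩).symm
      refine hy.not_ge ?_
      calc ∑' j, (S j).indicator (fun _ => c j) y
          = ∑' j : {j | y ∈ S j}, volume (T j) := by
            rw [tsum_congr fun j : {j | y ∈ S j} => hall j j.2, tsum_subtype {j | y ∈ S j} c]
            rfl
        _ = volume (⋃ j : {j | y ∈ S j}, T j) := (measure_iUnion hdisj_y fun j => (hT j).1).symm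
        _ ≤ volume (Icc 0 t.toReal) := measure_mono (iUnion_subset fun j => (hT j).2.1)
        _ = t := hvol
    rcases (hfull j).resolve_left hj τ hτ with h | ⟨i, ⟨hij, hR⟩, h⟩
    · exact ⟨j, hyj, j, h, irrefl_of p j, y, hyj, hyj⟩
    · exact ⟨j, hyj, i, h, asymm_of p hij, hR⟩

lemma exists_isWellOrder_of_finite_superlevel {ι β : Type*} [LinearOrder β] [OrderBot β] {r : ι → β}
    (hr : ∀ j, r j ≠ ⊥ → {i | r j ≤ r i}.Finite) :
    ∃ p : ι → ι → Prop, IsWellOrder ι p ∧ ∀ i j, ¬ p j i → r j ≤ r i := by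
  have : IsWellFounded ι fun i j => r j < r i := by
    refine ⟨WellFounded.wellFounded_iff_has_min.2 fun s ⟨k, hk⟩ => ?_⟩
    by_cases hs : ∃ j ∈ s, r j ≠ ⊥
    · obtain ⟨j, hj, hj0⟩ := hs
      obtain ⟨m, hm, hmax⟩ := exists_max_image (s ∩ {i | r j ≤ r i}) r
        ((hr j hj0).inter_of_right s) ⟨j, hj, le_rfl⟩
      exact ⟨m, hm.1, fun x hx hlt => (hmax x ⟨hx, hm.2.trans hlt.le⟩).not_gt hlt⟩
    · push Not at hs
      exact ⟨k, hk, fun x hx hlt => not_lt_bot (hlt.trans_eq (hs x hx))⟩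
  obtain ⟨p, hp, hwo⟩ := IsWellFounded.exists_well_order_ge fun i j => r j < r i
  exact ⟨p, hwo, fun i j hji => not_lt.1 fun h => hji (hp _ _ h)⟩

lemma ediam_iUnion_le_three_mul {ι Y : Type*} [PseudoEMetricSpace Y] {S : ι → Set Y} {B : Set Y}
    {r : ℝ≥0∞} (hB : ediam B ≤ r) (hS : ∀ k, ediam (S k) ≤ r) (hSB : ∀ k, (S k ∩ B).Nonempty) :
    ediam (⋃ k, S k) ≤ 3 * r := by
  refine ediam_le fun x hx y hy => ?_
  obtain ⟨k, hxk⟩ := mem_iUnion.1 hx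
  obtain ⟨l, hyl⟩ := mem_iUnion.1 hy
  obtain ⟨a, hak, haB⟩ := hSB k
  obtain ⟨b, hbl, hbB⟩ := hSB l
  calc edist x y ≤ edist x a + edist a b + edist b y := edist_triangle4 _ _ _ _
    _ ≤ r + r + r := by
      gcongr
      · exact (edist_le_ediam_of_mem hxk hak).trans (hS k)
      · exact (edist_le_ediam_of_mem haB hbB).trans hB
      · exact (edist_le_ediam_of_mem hbl hyl).trans (hS l)
    _ = 3 * r := by ring

theorem exists_cover_of_weighted_cover {ι Y : Type*} [Countable ι] [PseudoEMetricSpace Y]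
    {S : ι → Set Y} {r : ι → ℝ≥0∞} (hr : ∀ j, r j ≠ 0 → {i | r j ≤ r i}.Finite)
    (hS : ∀ j, ediam (S j) ≤ r j) (c w : ι → ℝ≥0∞) {t : ℝ≥0∞} (ht0 : t ≠ 0) (ht : t ≠ ⊤) :
    ∃ (J : Set ι) (U : ι → Set Y), (∀ j, ediam (U j) ≤ 3 * r j) ∧
      {y | t < ∑' j, (S j).indicator (fun _ => c j) y} ⊆ ⋃ j : J, U j ∧
      t * ∑' j : J, w j ≤ ∑' j, w j * c j := by
  obtain ⟨p, hwo, hp⟩ := exists_isWellOrder_of_finite_superlevel hr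
  obtain ⟨J, hJ, hcov⟩ := exists_weighted_selection p S c w ht0 ht
  refine ⟨J, fun i => ⋃ k : {k // r k ≤ r i ∧ (S k ∩ S i).Nonempty}, S k, fun i =>
    ediam_iUnion_le_three_mul (hS i) (fun k => (hS k).trans k.2.1) fun k => k.2.2,
    fun y hy => ?_, hJ⟩
  obtain ⟨j, hyj, i, hi, hji, hij⟩ := hcov y hy
  exact mem_iUnion.2 ⟨⟨i, hi⟩, mem_iUnion.2 ⟨⟨j, hp i j hji, inter_comm (S i) _ ▸ hij⟩, hyj⟩⟩

/-- The gauge `diam S ^ s`, with the value `0` on the empty set for every `s` (recall that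
`0 ^ 0 = 1`). -/
noncomputable def diamPow {X : Type*} [PseudoEMetricSpace X] (s : ℝ) (S : Set X) : ℝ≥0∞ :=
  ⨆ _ : S.Nonempty, ediam S ^ s

/-- The size-`δ` approximating measure in Carathéodory's construction of `μH[s]`: the infimum of
`∑ diam (t n) ^ s` over the countable covers of `B` by sets of diameter at most `δ`. -/
noncomputable def hausdorffContent {X : Type*} [PseudoEMetricSpace X] (s : ℝ) (δ : ℝ≥0∞)
    (B : Set X) : ℝ≥0∞ :=
  ⨅ (t : ℕ → Set X) (_ : B ⊆ ⋃ n, t n) (_ : ∀ n, ediam (t n) ≤ δ), ∑' n, diamPow s (t n)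

section HausdorffContent

section PseudoEMetricSpace

variable {X : Type*} [PseudoEMetricSpace X] {s : ℝ} {δ : ℝ≥0∞} {B : Set X}

@[simp]
lemma diamPow_empty : diamPow s (∅ : Set X) = 0 := by simp [diamPow]

lemma diamPow_of_nonempty (hB : B.Nonempty) : diamPow s B = ediam B ^ s := by simp [diamPow, hB]

lemma diamPow_le : diamPow s B ≤ ediam B ^ s := iSup_le fun _ => le_rfl

lemma diamPow_of_pos (hs : 0 < s) : diamPow s B = ediam B ^ s := by
  rcases B.eq_empty_or_nonempty with rfl | hB
  · simp [hs]
  · exact diamPow_of_nonempty hB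

lemma hausdorffContent_anti : Antitone fun δ => hausdorffContent s δ B := fun _ _ h =>
  le_iInf fun t => le_iInf₂ fun hB ht => iInf_le_of_le t (iInf₂_le hB fun n => (ht n).trans h)

lemma hausdorffContent_le_tsum {ι : Type*} [Countable ι] {t : ι → Set X} (hB : B ⊆ ⋃ i, t i)
    (ht : ∀ i, ediam (t i) ≤ δ) : hausdorffContent s δ B ≤ ∑' i, diamPow s (t i) := by
  obtain ⟨e, he⟩ := exists_injective_nat ι
  let T : ℕ → Set X := Function.extend e t fun _ => ∅
  have hT : ∀ i, T (e i) = t i := he.extend_apply _ _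
  have hcov : B ⊆ ⋃ n, T n := hB.trans (iUnion_subset fun i => hT i ▸ subset_iUnion T (e i))
  have hdiam : ∀ n, ediam (T n) ≤ δ := fun n => by
    rcases em (∃ i, e i = n) with ⟨i, rfl⟩ | hn
    · exact (hT i).symm ▸ ht i
    · simp [T, Function.extend_apply' _ _ _ hn]
  refine (iInf_le_of_le T (iInf₂_le hcov hdiam)).trans_eq ?_
  rw [← tsum_extend_zero he]
  refine tsum_congr fun n => ?_
  simp only [T, Function.apply_extend (diamPow s), Function.comp_def, diamPow_empty]
  rfl

@[simp]
lemma hausdorffContent_empty : hausdorffContent s δ (∅ : Set X) = 0 :=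
  nonpos_iff_eq_zero.1 <| (hausdorffContent_le_tsum (t := fun _ : ℕ => ∅) (by simp) (by simp)).trans
    (by simp)

lemma exists_cover_tsum_lt {c : ℝ≥0∞} (h : hausdorffContent s δ B < c) :
    ∃ t : ℕ → Set X, B ⊆ ⋃ n, t n ∧ (∀ n, ediam (t n) ≤ δ) ∧ ∑' n, diamPow s (t n) < c := by
  simpa only [hausdorffContent, iInf_lt_iff, exists_prop] using h

lemma hausdorffContent_fiber_le {ι Y : Type*} [Countable ι] {t : ι → Set X} {u : X → Y}
    (hB : B ⊆ ⋃ i, t i) (ht : ∀ i, ediam (t i) ≤ δ) (y : Y) :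
    hausdorffContent s δ (u ⁻¹' {y} ∩ B) ≤
      ∑' i, (u '' (t i ∩ B)).indicator (fun _ => ediam (t i) ^ s) y := by
  have hcov : u ⁻¹' {y} ∩ B ⊆ ⋃ i : {i | y ∈ u '' (t i ∩ B)}, t i := fun x hx => by
    obtain ⟨i, hi⟩ := mem_iUnion.1 (hB hx.2)
    exact mem_iUnion.2 ⟨⟨i, x, ⟨hi, hx.2⟩, hx.1⟩, hi⟩
  calc hausdorffContent s δ (u ⁻¹' {y} ∩ B)
      ≤ ∑' i : {i | y ∈ u '' (t i ∩ B)}, diamPow s (t i) :=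
        hausdorffContent_le_tsum hcov fun i => ht i
    _ ≤ ∑' i : {i | y ∈ u '' (t i ∩ B)}, ediam (t i) ^ s :=
        ENNReal.tsum_le_tsum fun _ => diamPow_le
    _ = ∑' i, (u '' (t i ∩ B)).indicator (fun _ => ediam (t i) ^ s) y :=
        tsum_subtype {i | y ∈ u '' (t i ∩ B)} fun i => ediam (t i) ^ s

end PseudoEMetricSpace

variable {X : Type*} [EMetricSpace X] [MeasurableSpace X] [BorelSpace X] {s : ℝ} {B : Set X}

lemma hausdorffMeasure_eq_iSup_hausdorffContent :
    μH[s] B = ⨆ n : ℕ, hausdorffContent s ((n : ℝ≥0∞) + 1)⁻¹ B := by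
  have hdef : μH[s] B = ⨆ (δ : ℝ≥0∞) (_ : 0 < δ), hausdorffContent s δ B :=
    Measure.hausdorffMeasure_apply s B
  rw [hdef]
  refine le_antisymm (iSup₂_le fun δ hδ => ?_)
    (iSup_le fun n => le_iSup₂_of_le _ (by simp) le_rfl)
  obtain ⟨n, hn⟩ := ENNReal.exists_inv_nat_lt hδ.ne'
  refine le_iSup_of_le n (hausdorffContent_anti (le_trans ?_ hn.le))
  gcongr
  exact le_self_add

lemma hausdorffContent_le_hausdorffMeasure {δ : ℝ≥0∞} (hδ : 0 < δ) :
    hausdorffContent s δ B ≤ μH[s] B := by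
  rw [Measure.hausdorffMeasure_apply]
  exact le_iSup₂_of_le δ hδ le_rfl

end HausdorffContent

section SmallScale

variable {X Y : Type*}

/-- `u` is `L`-Lipschitz on pairs of points of `A` that are close enough to each other. -/
def SmallScaleLipschitzOn [PseudoEMetricSpace X] [PseudoEMetricSpace Y] (L : ℝ≥0∞) (u : X → Y)
    (A : Set X) : Prop :=
  ∃ ε > 0, ∀ x ∈ A, ∀ y ∈ A, edist x y ≤ ε → edist (u x) (u y) ≤ L * edist x y

/-- The infinitesimal Lipschitz constant
`Lip₀(u) = lim_{ε → 0} sup {d(u x, u y) / d(x, y) : 0 < d(x, y) < ε}`. -/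
noncomputable def infinitesimalLip [PseudoEMetricSpace X] [PseudoEMetricSpace Y] (u : X → Y) :
    ℝ≥0∞ :=
  ⨅ (ε : ℝ≥0∞) (_ : 0 < ε), ⨆ (x : X) (y : X) (_ : x ≠ y) (_ : edist x y < ε),
    edist (u x) (u y) / edist x y

lemma SmallScaleLipschitzOn.exists_ediam_image_le [PseudoEMetricSpace X] [PseudoEMetricSpace Y]
    {L : ℝ≥0∞} {u : X → Y} {A : Set X} (hu : SmallScaleLipschitzOn L u A) :
    ∃ ε > 0, ∀ S, ediam S ≤ ε → ediam (u '' (S ∩ A)) ≤ L * ediam S := by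
  obtain ⟨ε, hε, hu⟩ := hu
  refine ⟨ε, hε, fun S hS => ediam_image_le_iff.2 fun x hx y hy => ?_⟩
  have hxy : edist x y ≤ ediam S := edist_le_ediam_of_mem hx.1 hy.1
  exact (hu x hx.2 y hy.2 (hxy.trans hS)).trans (by gcongr)

lemma smallScaleLipschitzOn_of_lipschitzOnWith [PseudoEMetricSpace X] [PseudoEMetricSpace Y]
    {K : ℝ≥0} {u : X → Y} {A : Set X} (hu : LipschitzOnWith K u A) :
    SmallScaleLipschitzOn K u A :=
  ⟨1, one_pos, fun _ hx _ hy _ => hu hx hy⟩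

lemma smallScaleLipschitzOn_top [EMetricSpace X] [PseudoEMetricSpace Y] (u : X → Y) (A : Set X) :
    SmallScaleLipschitzOn ⊤ u A := by
  refine ⟨1, one_pos, fun x _ y _ _ => ?_⟩
  rcases eq_or_ne x y with rfl | hxy
  · simp
  · simp [ENNReal.top_mul (edist_pos.2 hxy).ne']

lemma smallScaleLipschitzOn_of_infinitesimalLip_lt [EMetricSpace X] [PseudoEMetricSpace Y]
    {L : ℝ≥0∞} {u : X → Y} (hL : infinitesimalLip u < L) (A : Set X) :
    SmallScaleLipschitzOn L u A := by
  simp only [infinitesimalLip, iInf_lt_iff] at hL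
  obtain ⟨ε, hε, hsup⟩ := hL
  obtain ⟨ε', hε', hlt⟩ := exists_between hε
  refine ⟨ε', hε', fun x _ y _ hxy => ?_⟩
  rcases eq_or_ne x y with rfl | hne
  · simp
  have hdiv : edist (u x) (u y) / edist x y ≤ L := by
    refine (le_iSup₂_of_le x y ?_).trans hsup.le
    rw [iSup_pos hne, iSup_pos (hxy.trans_lt hlt)]
  rwa [ENNReal.div_le_iff (edist_pos.2 hne).ne' (hxy.trans_lt (hlt.trans_le le_top)).ne] at hdiv

lemma infinitesimalLip_eq_iInf_dist [MetricSpace X] [PseudoEMetricSpace Y] (u : X → Y) :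
    infinitesimalLip u = ⨅ (ε : ℝ) (_ : 0 < ε),
      ⨆ (x : X) (y : X) (_ : x ≠ y) (_ : dist x y < ε), edist (u x) (u y) / edist x y := by
  refine le_antisymm (le_iInf₂ fun ε hε => ?_) (le_iInf₂ fun ε hε => ?_)
  · refine iInf₂_le_of_le (ENNReal.ofReal ε) (by simpa using hε) ?_
    simp only [edist_lt_ofReal, le_rfl]
  · obtain ⟨ε', hε', hlt⟩ := ENNReal.lt_iff_exists_nnreal_btwn.1 hε
    refine iInf₂_le_of_le (ε' : ℝ) (by exact_mod_cast hε') ?_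
    gcongr with x y
    exact iSup_const_mono fun h => (edist_lt_coe.2 (dist_lt_coe.1 h)).trans hlt

end SmallScale

lemma finite_superlevel_of_tsum_rpow_ne_top {ι : Type*} {r : ι → ℝ≥0∞} {α : ℝ} (hα : 0 < α)
    (hr : ∑' i, r i ^ α ≠ ⊤) {a : ℝ≥0∞} (ha : a ≠ 0) : {i | a ≤ r i}.Finite :=
  (ENNReal.finite_const_le_of_tsum_ne_top hr (ε := a ^ α)
    (by simp [ENNReal.rpow_eq_zero_iff, ha, hα.le])).subset
    fun _ hi => ENNReal.rpow_le_rpow hi hα.le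

section WeakType

variable {X Y : Type*} {α β : ℝ} {L : ℝ≥0∞} {u : X → Y} {A : Set X}

lemma mul_hausdorffContent_superlevel_le_of_cover [PseudoEMetricSpace X] [PseudoEMetricSpace Y]
    (hα : 0 < α) (hβ : 0 ≤ β) (hβα : β ≤ α) (hL : L ≠ ⊤) {s : ℕ → Set X} (hAs : A ⊆ ⋃ n, s n)
    (hs : ∑' n, ediam (s n) ^ α ≠ ⊤)
    (hu : ∀ n, ediam (u '' (s n ∩ A)) ≤ L * ediam (s n)) {δ ρ : ℝ≥0∞}
    (hδ : ∀ n, ediam (s n) ≤ δ) (hρ : ∀ n, 3 * (L * ediam (s n)) ≤ ρ) (t : ℝ≥0∞) :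
    t * hausdorffContent β ρ {y | t < hausdorffContent (α - β) δ (u ⁻¹' {y} ∩ A)} ≤
      (3 * L) ^ β * ∑' n, ediam (s n) ^ α := by
  rcases eq_or_ne t 0 with rfl | ht0
  · simp
  rcases eq_or_ne t ⊤ with rfl | ht
  · simp
  have hfin : ∑' n, (L * ediam (s n)) ^ α ≠ ⊤ := by
    simp_rw [ENNReal.mul_rpow_of_nonneg _ _ hα.le, ENNReal.tsum_mul_left]
    exact ENNReal.mul_ne_top (ENNReal.rpow_ne_top_of_nonneg hα.le hL) hs
  obtain ⟨J, U, hU, hcov, hJ⟩ := exists_cover_of_weighted_cover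
    (fun _ h => finite_superlevel_of_tsum_rpow_ne_top hα hfin h) hu
    (fun n => ediam (s n) ^ (α - β)) (fun n => (3 * (L * ediam (s n))) ^ β) ht0 ht
  have hcov' : {y | t < hausdorffContent (α - β) δ (u ⁻¹' {y} ∩ A)} ⊆ ⋃ j : J, U j :=
    Subset.trans (fun y hy => hy.trans_le (hausdorffContent_fiber_le hAs hδ y)) hcov
  have hpow : ∀ d : ℝ≥0∞, (3 * (L * d)) ^ β * d ^ (α - β) = (3 * L) ^ β * d ^ α := fun d => by
    rw [← mul_assoc 3, ENNReal.mul_rpow_of_nonneg _ _ hβ, mul_assoc,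
      ← ENNReal.rpow_add_of_nonneg _ _ hβ (sub_nonneg.2 hβα), add_sub_cancel]
  calc t * hausdorffContent β ρ {y | t < hausdorffContent (α - β) δ (u ⁻¹' {y} ∩ A)}
      ≤ t * ∑' j : J, diamPow β (U j) := by
        gcongr
        exact hausdorffContent_le_tsum hcov' fun j => (hU j).trans (hρ j)
    _ ≤ t * ∑' j : J, (3 * (L * ediam (s j))) ^ β := by
        gcongr with j
        exact diamPow_le.trans (ENNReal.rpow_le_rpow (hU j) hβ)
    _ ≤ ∑' n, (3 * (L * ediam (s n))) ^ β * ediam (s n) ^ (α - β) := hJ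
    _ = (3 * L) ^ β * ∑' n, ediam (s n) ^ α := by simp_rw [hpow, ENNReal.tsum_mul_left]

variable [EMetricSpace X] [MeasurableSpace X] [BorelSpace X]

lemma mul_hausdorffContent_superlevel_le [PseudoEMetricSpace Y] (hα : 0 < α) (hβ : 0 ≤ β)
    (hβα : β ≤ α) (hL : L ≠ ⊤) (hu : SmallScaleLipschitzOn L u A) (hA : μH[α] A ≠ ⊤) {δ ρ : ℝ≥0∞}
    (hδ : 0 < δ) (hρ : 0 < ρ) (t : ℝ≥0∞) :
    t * hausdorffContent β ρ {y | t < hausdorffContent (α - β) δ (u ⁻¹' {y} ∩ A)} ≤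
      (3 * L) ^ β * μH[α] A := by
  have hLβ : (3 * L) ^ β ≠ ⊤ := ENNReal.rpow_ne_top_of_nonneg hβ (by finiteness)
  obtain ⟨ε, hε, hu⟩ := hu.exists_ediam_image_le
  refine ENNReal.le_mul_of_forall_lt (Or.inr hA) (Or.inl hLβ) fun K hK M hM => ?_
  have hpos : 0 < min (min δ ε) (ρ / (3 * L)) :=
    lt_min (lt_min hδ hε) (ENNReal.div_pos hρ.ne' (by finiteness))
  obtain ⟨s, hAs, hs, hsM⟩ :=
    exists_cover_tsum_lt ((hausdorffContent_le_hausdorffMeasure hpos).trans_lt hM)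
  simp only [diamPow_of_pos hα] at hsM
  simp only [le_min_iff] at hs
  refine (mul_hausdorffContent_superlevel_le_of_cover hα hβ hβα hL hAs hsM.ne_top
    (fun n => hu _ (hs n).1.2) (fun n => (hs n).1.1) (fun n => ?_) t).trans
    (mul_le_mul' hK.le hsM.le)
  rw [← mul_assoc]
  exact (mul_le_mul_right (hs n).2 _).trans ENNReal.mul_div_le

theorem mul_hausdorffMeasure_superlevel_le [EMetricSpace Y] [MeasurableSpace Y] [BorelSpace Y]
    (hα : 0 < α) (hβ : 0 ≤ β) (hβα : β ≤ α) (hL : L ≠ ⊤) (hu : SmallScaleLipschitzOn L u A)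
    (hA : μH[α] A ≠ ⊤) (t : ℝ≥0∞) :
    t * μH[β] {y | t < μH[α - β] (u ⁻¹' {y} ∩ A)} ≤ (3 * L) ^ β * μH[α] A := by
  let E : ℕ → Set Y := fun n =>
    {y | t < hausdorffContent (α - β) ((n : ℝ≥0∞) + 1)⁻¹ (u ⁻¹' {y} ∩ A)}
  have hE : {y | t < μH[α - β] (u ⁻¹' {y} ∩ A)} = ⋃ n, E n := by
    ext y
    simp [E, hausdorffMeasure_eq_iSup_hausdorffContent, lt_iSup_iff]
  have hmono : Monotone E := fun m n hmn y hy => hy.trans_le <| hausdorffContent_anti (by gcongr)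
  rw [hE, hmono.measure_iUnion, ENNReal.mul_iSup]
  refine iSup_le fun n => ?_
  rw [hausdorffMeasure_eq_iSup_hausdorffContent, ENNReal.mul_iSup]
  exact iSup_le fun m =>
    mul_hausdorffContent_superlevel_le hα hβ hβα hL hu hA (by simp) (by simp) t

end WeakType

lemma ae_eq_zero_of_forall_measure_lt_eq_zero {Ω : Type*} [MeasurableSpace Ω] {μ : Measure Ω}
    {f : Ω → ℝ≥0∞} (h : ∀ t, t ≠ 0 → μ {x | t < f x} = 0) : ∀ᵐ x ∂μ, f x = 0 := by
  simp_rw [← nonpos_iff_eq_zero, ae_le_const_iff_forall_gt_measure_zero]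
  intro b hb
  obtain ⟨t, ht0, htb⟩ := exists_between hb
  exact measure_mono_null (fun x hx => htb.trans_le hx) (h t ht0.ne')

section NullFibers

variable {X Y : Type*} [EMetricSpace X] [MeasurableSpace X] [BorelSpace X] [EMetricSpace Y]
  [MeasurableSpace Y] [BorelSpace Y] {α β : ℝ} {u : X → Y} {A : Set X}

lemma ae_hausdorffMeasure_fiber_eq_zero_of_smallScaleLipschitzOn {L : ℝ≥0∞} (hα : 0 < α)
    (hβ : 0 ≤ β) (hβα : β ≤ α) (hL : L ≠ ⊤) (hu : SmallScaleLipschitzOn L u A)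
    (hA : μH[α] A = 0) : ∀ᵐ y ∂μH[β], μH[α - β] (u ⁻¹' {y} ∩ A) = 0 := by
  refine ae_eq_zero_of_forall_measure_lt_eq_zero fun t ht0 => ?_
  have hle := mul_hausdorffMeasure_superlevel_le hα hβ hβα hL hu (by simp [hA]) t
  rw [hA, mul_zero, nonpos_iff_eq_zero] at hle
  exact (mul_eq_zero.1 hle).resolve_left ht0

theorem ae_hausdorffMeasure_fiber_eq_zero_of_measure_eq_zero [SecondCountableTopology X]
    (hβ : 0 ≤ β) (hβα : β ≤ α) (hu : LocallyLipschitz u) (hA : μH[α] A = 0) :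
    ∀ᵐ y ∂μH[β], μH[α - β] (u ⁻¹' {y} ∩ A) = 0 := by
  rcases hβ.eq_or_lt with rfl | hβ0
  · refine .of_forall fun y => ?_
    rw [sub_zero]
    exact measure_mono_null inter_subset_right hA
  choose K V hV hK using hu
  obtain ⟨s, hs, hsV⟩ := TopologicalSpace.countable_cover_nhds hV
  have hnull : ∀ x ∈ s, ∀ᵐ y ∂μH[β], μH[α - β] (u ⁻¹' {y} ∩ (A ∩ V x)) = 0 := fun x _ =>
    ae_hausdorffMeasure_fiber_eq_zero_of_smallScaleLipschitzOn (hβ0.trans_le hβα) hβ hβα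
      ENNReal.coe_ne_top
      (smallScaleLipschitzOn_of_lipschitzOnWith ((hK x).mono inter_subset_right))
      (measure_mono_null inter_subset_left hA)
  filter_upwards [(ae_ball_iff hs).2 hnull] with y hy
  refine measure_mono_null ?_ ((measure_biUnion_null_iff hs).2 hy)
  rw [← inter_iUnion₂, ← inter_iUnion₂, hsV, inter_univ]

theorem ae_hausdorffMeasure_fiber_eq_zero_of_infinitesimalLip_eq_zero (hβ : 0 < β) (hβα : β ≤ α)
    (hu : infinitesimalLip u = 0) (hA : μH[α] A ≠ ⊤) :
    ∀ᵐ y ∂μH[β], μH[α - β] (u ⁻¹' {y} ∩ A) = 0 := by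
  refine ae_eq_zero_of_forall_measure_lt_eq_zero fun t ht0 => ?_
  have hlim : Tendsto (fun L : ℝ≥0∞ => (3 * L) ^ β * μH[α] A) (𝓝[>] 0) (𝓝 0) := by
    have hcont : Continuous fun L : ℝ≥0∞ => (3 * L) ^ β * μH[α] A :=
      (ENNReal.continuous_mul_const hA).comp <| ENNReal.continuous_rpow_const.comp <|
        ENNReal.continuous_const_mul (by finiteness)
    exact tendsto_nhdsWithin_of_tendsto_nhds (hcont.tendsto' 0 0 (by simp [hβ]))
  have hle : t * μH[β] {y | t < μH[α - β] (u ⁻¹' {y} ∩ A)} ≤ 0 := by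
    refine ge_of_tendsto hlim ?_
    filter_upwards [Ioo_mem_nhdsGT one_pos] with L hL
    exact mul_hausdorffMeasure_superlevel_le (hβ.trans_le hβα) hβ.le hβα
      (hL.2.trans one_lt_top).ne
      (smallScaleLipschitzOn_of_infinitesimalLip_lt (hu.trans_lt hL.1) A) hA t
  exact (mul_eq_zero.1 (nonpos_iff_eq_zero.1 hle)).resolve_left ht0

end NullFibers

lemma tendsto_inv_natCast_add_one : Tendsto (fun n : ℕ => ((n : ℝ≥0∞) + 1)⁻¹) atTop (𝓝 0) := by
  simpa using (tendsto_add_atTop_iff_nat 1).2 ENNReal.tendsto_inv_nat_nhds_zero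

section Measurability

variable {X Y : Type*} {s : ℝ} {δ δ' : ℝ≥0∞} {u : X → Y}

lemma exists_isOpen_superset_diamPow_le [PseudoEMetricSpace X] (hs : 0 ≤ s) {S : Set X}
    (hS : ediam S < δ) {e : ℝ≥0∞} (he : e ≠ 0) :
    ∃ U, IsOpen U ∧ S ⊆ U ∧ ediam U ≤ δ ∧ diamPow s U ≤ diamPow s S + e := by
  rcases S.eq_empty_or_nonempty with rfl | hSne
  · exact ⟨∅, isOpen_empty, Subset.rfl, by simp, by simp⟩
  rw [diamPow_of_nonempty hSne]
  have hdiam : Tendsto (fun ρ : ℝ≥0 => ediam S + 2 * ρ) (𝓝[>] 0) (𝓝 (ediam S)) := by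
    have hcont : Continuous fun ρ : ℝ≥0 => ediam S + 2 * ρ := continuous_const.add <|
      (ENNReal.continuous_const_mul (by finiteness)).comp ENNReal.continuous_coe
    exact tendsto_nhdsWithin_of_tendsto_nhds (hcont.tendsto' 0 _ (by simp))
  have hpow : ediam S ^ s < ediam S ^ s + e :=
    ENNReal.lt_add_right (ENNReal.rpow_ne_top_of_nonneg hs hS.ne_top) he
  obtain ⟨ρ, ⟨hρδ, hρe⟩, hρ⟩ := ((hdiam.eventually_lt_const hS).and
    ((hdiam.ennrpow_const s).eventually_lt_const hpow)).and self_mem_nhdsWithin |>.exists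
  refine ⟨thickening ρ S, isOpen_thickening, self_subset_thickening hρ S,
    (ediam_thickening_le ρ).trans hρδ.le, ?_⟩
  exact diamPow_le.trans <| (ENNReal.rpow_le_rpow (ediam_thickening_le ρ) hs).trans hρe.le

lemma exists_open_cover_tsum_lt [PseudoEMetricSpace X] (hs : 0 ≤ s) {B : Set X} {c : ℝ≥0∞}
    (hδ : δ < δ') (h : hausdorffContent s δ B < c) :
    ∃ t : ℕ → Set X, (∀ n, IsOpen (t n)) ∧ B ⊆ ⋃ n, t n ∧ (∀ n, ediam (t n) ≤ δ') ∧
      ∑' n, diamPow s (t n) < c := by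
  obtain ⟨S, hBS, hS, hsum⟩ := exists_cover_tsum_lt h
  obtain ⟨e, he, hesum⟩ := ENNReal.exists_pos_sum_of_countable (tsub_pos_of_lt hsum).ne' ℕ
  choose U hU hSU hUδ hUS using fun n => exists_isOpen_superset_diamPow_le hs
    ((hS n).trans_lt hδ) (ENNReal.coe_ne_zero.2 (he n).ne')
  refine ⟨U, hU, hBS.trans (iUnion_mono hSU), hUδ, ?_⟩
  calc ∑' n, diamPow s (U n) ≤ ∑' n, (diamPow s (S n) + e n) := ENNReal.tsum_le_tsum hUS
    _ = ∑' n, diamPow s (S n) + ∑' n, (e n : ℝ≥0∞) := ENNReal.tsum_add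
    _ < c := by
      rw [add_comm]
      exact lt_tsub_iff_right.1 hesum

lemma isOpen_setOf_fiber_inter_subset [TopologicalSpace X] [TopologicalSpace Y] [T2Space Y]
    (hu : Continuous u) {K U : Set X} (hK : IsCompact K) (hU : IsOpen U) :
    IsOpen {y | u ⁻¹' {y} ∩ K ⊆ U} := by
  have heq : {y | u ⁻¹' {y} ∩ K ⊆ U} = (u '' (K \ U))ᶜ := by
    ext y
    simp only [subset_def, mem_ofPred_eq, mem_compl_iff, mem_image, mem_inter_iff, mem_preimage,
      mem_singleton_iff, Set.mem_sdiff]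
    grind
  rw [heq]
  exact ((hK.diff hU).image hu).isClosed.isOpen_compl

lemma hausdorffContent_fiber_lt_subset_interior [PseudoEMetricSpace X] [TopologicalSpace Y]
    [T2Space Y] (hs : 0 ≤ s) (hu : Continuous u) {K : Set X} (hK : IsCompact K) (hδ : δ < δ')
    (c : ℝ≥0∞) :
    {y | hausdorffContent s δ (u ⁻¹' {y} ∩ K) < c} ⊆
      interior {y | hausdorffContent s δ' (u ⁻¹' {y} ∩ K) < c} := by
  intro y hy
  obtain ⟨t, ht, hcov, hdiam, hsum⟩ := exists_open_cover_tsum_lt hs hδ hy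
  refine mem_interior.2 ⟨_, fun z hz => ?_,
    isOpen_setOf_fiber_inter_subset hu hK (isOpen_iUnion ht), hcov⟩
  exact (hausdorffContent_le_tsum hz hdiam).trans_lt hsum

theorem measurable_hausdorffMeasure_fiber_inter_isCompact [EMetricSpace X] [MeasurableSpace X]
    [BorelSpace X] [TopologicalSpace Y] [T2Space Y] [MeasurableSpace Y] [OpensMeasurableSpace Y]
    (hs : 0 ≤ s) (hu : Continuous u) {K : Set X} (hK : IsCompact K) :
    Measurable fun y => μH[s] (u ⁻¹' {y} ∩ K) := by
  refine measurable_of_Iic fun c => ?_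
  rcases eq_or_ne c ⊤ with rfl | hc
  · simp
  let δ : ℕ → ℝ≥0∞ := fun n => ((n : ℝ≥0∞) + 1)⁻¹
  have hδ0 : ∀ n, 0 < δ n := fun n => by simp [δ]
  have heq : (fun y => μH[s] (u ⁻¹' {y} ∩ K)) ⁻¹' Iic c =
      ⋂ n, interior {y | hausdorffContent s (δ n) (u ⁻¹' {y} ∩ K) < c + δ n} := by
    refine Subset.antisymm (fun y hy => mem_iInter.2 fun n => ?_) fun y hy => ?_
    · obtain ⟨ε, hε0, hε⟩ := exists_between (hδ0 n)
      refine hausdorffContent_fiber_lt_subset_interior hs hu hK hε _ ?_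
      exact ((hausdorffContent_le_hausdorffMeasure hε0).trans hy).trans_lt
        (ENNReal.lt_add_right hc (hδ0 n).ne')
    · have hlt : ∀ n, hausdorffContent s (δ n) (u ⁻¹' {y} ∩ K) < c + δ n := fun n =>
        interior_subset (s := {y | hausdorffContent s (δ n) (u ⁻¹' {y} ∩ K) < c + δ n})
          (mem_iInter.1 hy n)
      have hlim : Tendsto (fun n => c + δ n) atTop (𝓝 c) := by
        simpa using tendsto_inv_natCast_add_one.const_add c
      change μH[s] (u ⁻¹' {y} ∩ K) ≤ c
      rw [hausdorffMeasure_eq_iSup_hausdorffContent]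
      refine iSup_le fun m => ge_of_tendsto hlim ?_
      filter_upwards [eventually_ge_atTop m] with n hmn
      exact (hausdorffContent_anti (by simp only [δ]; gcongr)).trans (hlt n).le
  rw [heq]
  exact .iInter fun n => isOpen_interior.measurableSet

lemma exists_monotone_isCompact_measure_sdiff_iUnion_eq_zero [TopologicalSpace X] [T2Space X]
    [MeasurableSpace X] [OpensMeasurableSpace X] {μ : Measure X} [μ.InnerRegularCompactLTTop]
    {A : Set X} (hA : MeasurableSet A) (hμA : μ A ≠ ⊤) :
    ∃ K : ℕ → Set X, Monotone K ∧ (∀ n, IsCompact (K n)) ∧ (∀ n, K n ⊆ A) ∧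
      μ (A \ ⋃ n, K n) = 0 := by
  choose F hFA hF hFμ using fun n : ℕ =>
    hA.exists_isCompact_sdiff_lt hμA (ε := ((n : ℝ≥0∞) + 1)⁻¹) (by simp)
  refine ⟨accumulate F, monotone_accumulate, isCompact_accumulate hF,
    fun n => iUnion₂_subset fun m _ => hFA m, ?_⟩
  rw [iUnion_accumulate, ← nonpos_iff_eq_zero]
  refine ge_of_tendsto' tendsto_inv_natCast_add_one fun n => ?_
  exact (measure_mono (sdiff_subset_sdiff_right (subset_iUnion F n))).trans (hFμ n).le

theorem aemeasurable_hausdorffMeasure_fiber [EMetricSpace X] [CompleteSpace X]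
    [SecondCountableTopology X] [MeasurableSpace X] [BorelSpace X] [EMetricSpace Y]
    [MeasurableSpace Y] [BorelSpace Y] {α β : ℝ} (hβ : 0 ≤ β) (hβα : β ≤ α)
    (hu : LocallyLipschitz u) {A : Set X} (hA : MeasurableSet A) (hAfin : μH[α] A ≠ ⊤) :
    AEMeasurable (fun y => μH[α - β] (u ⁻¹' {y} ∩ A)) μH[β] := by
  have : IsFiniteMeasure ((μH[α] : Measure X).restrict A) := isFiniteMeasure_restrict.2 hAfin
  obtain ⟨K, hKmono, hK, hKA, hnull⟩ := exists_monotone_isCompact_measure_sdiff_iUnion_eq_zero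
    (μ := (μH[α] : Measure X).restrict A) hA (measure_ne_top _ _)
  rw [Measure.restrict_eq_self _ sdiff_subset] at hnull
  refine ⟨fun y => ⨆ n, μH[α - β] (u ⁻¹' {y} ∩ K n), .iSup fun n =>
    measurable_hausdorffMeasure_fiber_inter_isCompact (sub_nonneg.2 hβα) hu.continuous (hK n), ?_⟩
  filter_upwards [ae_hausdorffMeasure_fiber_eq_zero_of_measure_eq_zero hβ hβα hu hnull] with y hy
  have hmono : Monotone fun n => u ⁻¹' {y} ∩ K n := fun m n hmn =>
    inter_subset_inter_right _ (hKmono hmn)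
  rw [← hmono.measure_iUnion, ← inter_iUnion]
  refine le_antisymm ?_ (measure_mono (inter_subset_inter_right _ (iUnion_subset hKA)))
  calc μH[α - β] (u ⁻¹' {y} ∩ A)
      ≤ μH[α - β] ((u ⁻¹' {y} ∩ ⋃ n, K n) ∪ (u ⁻¹' {y} ∩ (A \ ⋃ n, K n))) := by
        rw [← inter_union_distrib_left, union_sdiff_self]
        gcongr
        exact subset_union_right
    _ ≤ μH[α - β] (u ⁻¹' {y} ∩ ⋃ n, K n) := (measure_union_le _ _).trans_eq (by rw [hy, add_zero])

end Measurability

section IntegralBound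

variable {X Y : Type*} {α β : ℝ} {C L : ℝ≥0∞} {u : X → Y} {A : Set X}

lemma lintegral_tsum_indicator_closure_image_le [PseudoEMetricSpace X] [EMetricSpace Y]
    [MeasurableSpace Y] [BorelSpace Y] (hβ : 0 ≤ β) (hβα : β ≤ α)
    (hC : ∀ E : Set Y, μH[β] E ≤ C * ediam E ^ β) {t : ℕ → Set X}
    (ht : ∀ n, ediam (u '' (t n ∩ A)) ≤ L * ediam (t n)) :
    ∫⁻ y, ∑' n, (closure (u '' (t n ∩ A))).indicator (fun _ => ediam (t n) ^ (α - β)) y ∂μH[β] ≤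
      C * L ^ β * ∑' n, diamPow α (t n) := by
  rw [lintegral_tsum_indicator_const (fun _ => isClosed_closure.measurableSet),
    ← ENNReal.tsum_mul_left]
  refine ENNReal.tsum_le_tsum fun n => ?_
  rcases (t n).eq_empty_or_nonempty with h | h
  · simp [h]
  calc ediam (t n) ^ (α - β) * μH[β] (closure (u '' (t n ∩ A)))
      ≤ ediam (t n) ^ (α - β) * (C * (L * ediam (t n)) ^ β) := by
        gcongr
        refine (hC _).trans ?_
        rw [ediam_closure]
        gcongr
        exact ht n
    _ = C * L ^ β * (ediam (t n) ^ (α - β) * ediam (t n) ^ β) := by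
        rw [ENNReal.mul_rpow_of_nonneg _ _ hβ]
        ring
    _ = C * L ^ β * diamPow α (t n) := by
        rw [← ENNReal.rpow_add_of_nonneg _ _ (sub_nonneg.2 hβα) hβ, sub_add_cancel,
          diamPow_of_nonempty h]

variable [EMetricSpace X] [MeasurableSpace X] [BorelSpace X]

lemma hausdorffMeasure_fiber_le_liminf [TopologicalSpace Y] {s : ℝ} {δ : ℕ → ℝ≥0∞}
    (hδ : Tendsto δ atTop (𝓝 0)) {t : ℕ → ℕ → Set X} (hA : ∀ n, A ⊆ ⋃ i, t n i)
    (ht : ∀ n i, ediam (t n i) ≤ δ n) (y : Y) :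
    μH[s] (u ⁻¹' {y} ∩ A) ≤ liminf (fun n =>
      ∑' i, (closure (u '' (t n i ∩ A))).indicator (fun _ => ediam (t n i) ^ s) y) atTop := by
  let I : ℕ → Set ℕ := fun n => {i | y ∈ closure (u '' (t n i ∩ A))}
  have hcov : ∀ n, u ⁻¹' {y} ∩ A ⊆ ⋃ i : I n, t n i := fun n x hx => by
    obtain ⟨i, hi⟩ := mem_iUnion.1 (hA n hx.2)
    exact mem_iUnion.2 ⟨⟨i, subset_closure ⟨x, ⟨hi, hx.2⟩, hx.1⟩⟩, hi⟩
  refine (Measure.hausdorffMeasure_le_liminf_tsum (ι := fun n => I n) s (u ⁻¹' {y} ∩ A) δ hδ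
    (fun n i => t n i) (.of_forall fun n i => ht n i) (.of_forall hcov)).trans_eq ?_
  exact congrArg (liminf · atTop) <| funext fun n => tsum_subtype (I n) fun i => ediam (t n i) ^ s

theorem lintegral_hausdorffMeasure_fiber_le [EMetricSpace Y] [MeasurableSpace Y] [BorelSpace Y]
    (hβ : 0 ≤ β) (hβα : β ≤ α) (hC : ∀ E : Set Y, μH[β] E ≤ C * ediam E ^ β)
    (hu : SmallScaleLipschitzOn L u A) (hA0 : μH[α] A ≠ 0) (hA : μH[α] A ≠ ⊤) :
    ∫⁻ y, μH[α - β] (u ⁻¹' {y} ∩ A) ∂μH[β] ≤ C * L ^ β * μH[α] A := by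
  refine ENNReal.le_mul_of_forall_lt (Or.inr hA) (Or.inr hA0) fun K hK M hM => ?_
  obtain ⟨ε, hε, hu⟩ := hu.exists_ediam_image_le
  choose t hAt ht htM using fun n : ℕ => exists_cover_tsum_lt <|
    (hausdorffContent_le_hausdorffMeasure (lt_min hε (by simp : 0 < ((n : ℝ≥0∞) + 1)⁻¹))).trans_lt
      hM
  simp only [le_min_iff] at ht
  let g : ℕ → Y → ℝ≥0∞ := fun n y =>
    ∑' i, (closure (u '' (t n i ∩ A))).indicator (fun _ => ediam (t n i) ^ (α - β)) y
  have hg : ∀ n, Measurable (g n) := fun n =>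
    .tsum fun i => measurable_const.indicator isClosed_closure.measurableSet
  calc ∫⁻ y, μH[α - β] (u ⁻¹' {y} ∩ A) ∂μH[β]
      ≤ ∫⁻ y, liminf (fun n => g n y) atTop ∂μH[β] := lintegral_mono
        (hausdorffMeasure_fiber_le_liminf tendsto_inv_natCast_add_one hAt fun n i => (ht n i).2)
    _ ≤ liminf (fun n => ∫⁻ y, g n y ∂μH[β]) atTop := lintegral_liminf_le hg
    _ ≤ liminf (fun _ : ℕ => C * L ^ β * M) atTop := liminf_le_liminf <| .of_forall fun n =>
        (lintegral_tsum_indicator_closure_image_le hβ hβα hC fun i => hu _ (ht n i).1).trans <| by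
          gcongr
          exact (htM n).le
    _ = C * L ^ β * M := liminf_const _
    _ ≤ K * M := by gcongr

theorem lintegral_hausdorffMeasure_fiber_le_infinitesimalLip [EMetricSpace Y] [MeasurableSpace Y]
    [BorelSpace Y] (hβ : 0 ≤ β) (hβα : β ≤ α) (hC : ∀ E : Set Y, μH[β] E ≤ C * ediam E ^ β)
    (hu : infinitesimalLip u ^ β ≠ 0) (hA0 : μH[α] A ≠ 0) (hA : μH[α] A ≠ ⊤) :
    ∫⁻ y, μH[α - β] (u ⁻¹' {y} ∩ A) ∂μH[β] ≤ C * infinitesimalLip u ^ β * μH[α] A := by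
  rcases eq_or_ne (infinitesimalLip u) ⊤ with hLtop | hLtop
  · rw [hLtop]
    exact lintegral_hausdorffMeasure_fiber_le hβ hβα hC (smallScaleLipschitzOn_top u A) hA0 hA
  have hlim : Tendsto (fun L => C * L ^ β * μH[α] A) (𝓝[>] infinitesimalLip u)
      (𝓝 (C * infinitesimalLip u ^ β * μH[α] A)) :=
    ENNReal.Tendsto.mul_const (ENNReal.Tendsto.const_mul
      (ENNReal.continuous_rpow_const.continuousWithinAt) (Or.inl hu)) (Or.inr hA)
  have : (𝓝[>] infinitesimalLip u).NeBot := nhdsGT_neBot_of_exists_gt ⟨⊤, hLtop.lt_top⟩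
  refine ge_of_tendsto hlim ?_
  filter_upwards [self_mem_nhdsWithin] with L hL
  exact lintegral_hausdorffMeasure_fiber_le hβ hβα hC
    (smallScaleLipschitzOn_of_infinitesimalLip_lt hL A) hA0 hA

end IntegralBound

theorem abstract_coarea_inequality_general {X Y : Type*} [EMetricSpace X] [CompleteSpace X]
    [SecondCountableTopology X] [MeasurableSpace X] [BorelSpace X] [EMetricSpace Y]
    [MeasurableSpace Y] [BorelSpace Y] {α β : ℝ} (hβ : 0 ≤ β) (hβα : β ≤ α) {C : ℝ≥0∞}
    (hC : ∀ E : Set Y, μH[β] E ≤ C * ediam E ^ β) {u : X → Y} (hu : LocallyLipschitz u)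
    {A : Set X} (hA : MeasurableSet A) (hAfin : μH[α] A ≠ ⊤) :
    AEMeasurable (fun y => μH[α - β] (u ⁻¹' {y} ∩ A)) μH[β] ∧
      ∫⁻ y, μH[α - β] (u ⁻¹' {y} ∩ A) ∂μH[β] ≤ C * infinitesimalLip u ^ β * μH[α] A := by
  refine ⟨aemeasurable_hausdorffMeasure_fiber hβ hβα hu hA hAfin, ?_⟩
  rcases eq_or_ne (μH[α] A) 0 with hA0 | hA0
  · have hnull := ae_hausdorffMeasure_fiber_eq_zero_of_measure_eq_zero hβ hβα hu hA0
    simp [lintegral_congr_ae hnull]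
  by_cases hL0 : infinitesimalLip u = 0 ∧ 0 < β
  · have hnull :=
      ae_hausdorffMeasure_fiber_eq_zero_of_infinitesimalLip_eq_zero hL0.2 hβα hL0.1 hAfin
    simp [lintegral_congr_ae hnull]
  refine lintegral_hausdorffMeasure_fiber_le_infinitesimalLip hβ hβα hC (fun h => hL0 ?_) hA0 hAfin
  simpa [ENNReal.rpow_eq_zero_iff, hβ.not_gt] using h

/-- (Abstract coarea inequality)  Let `(X, d_X)`, `(Y, d_Y)` be boundedly compact (i.e.
proper) metric spaces and suppose there are `β ≥ 0` and `C ≥ 0` with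
`H^β(E) ≤ C diam(E)^β` for all `E ⊆ Y`.  Let `u : X → Y` be locally Lipschitz and let
`Lip₀(u) = lim_{ε→0} sup { d_Y(u x, u y) / d_X(x, y) : 0 < d_X(x, y) < ε }`.  Then for
every `α ≥ β` and every Borel set `A ⊆ X` with `H^α(A) < ∞`, the function
`y ↦ H^(α-β)(u⁻¹(y) ∩ A)` is `H^β`-measurable and
`∫_Y H^(α-β)(u⁻¹(y) ∩ A) dH^β(y) ≤ C Lip₀(u)^β H^α(A)`. -/
theorem abstract_coarea_inequality
    {X Y : Type*} [MetricSpace X] [ProperSpace X] [MeasurableSpace X] [BorelSpace X]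
    [MetricSpace Y] [ProperSpace Y] [MeasurableSpace Y] [BorelSpace Y]
    (β : ℝ) (hβ : 0 ≤ β) (C : ℝ≥0∞)
    (hC : ∀ E : Set Y, μH[β] E ≤ C * (EMetric.diam E) ^ β)
    (u : X → Y) (hu : LocallyLipschitz u)
    (Lip₀ : ℝ≥0∞)
    (hLip₀ : Lip₀ = ⨅ (ε : ℝ) (_ : 0 < ε),
      ⨆ (x : X) (y : X) (_ : x ≠ y) (_ : dist x y < ε), edist (u x) (u y) / edist x y)
    (α : ℝ) (hαβ : β ≤ α)
    (A : Set X) (hA : MeasurableSet A) (hAfin : μH[α] A < ⊤) :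
    AEMeasurable (fun y : Y => μH[α - β] (u ⁻¹' {y} ∩ A)) μH[β] ∧
    ∫⁻ y, μH[α - β] (u ⁻¹' {y} ∩ A) ∂μH[β] ≤ C * Lip₀ ^ β * μH[α] A := by
  subst hLip₀
  rw [← infinitesimalLip_eq_iInf_dist]
  exact abstract_coarea_inequality_general hβ hαβ hC hu hA hAfin.ne
end

section
/- In the Heisenberg group H^n endowed with a rotationally invariant homogeneous distance, for each 1 ≤ k ≤ n there exists a constant c(n,k) > 0 such that for every vertical subgroup P ∈ 𝒯_{H^n,ℝ^k} (topological dimension 2n+1−k), c(n,k) · S^{2n+2-k}⌊P = H_E^{2n+1-k}⌊P, where H_E denotes the Euclidean Hausdorff measure on ℝ^{2n+1} ≅ H^n. -/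
open scoped ENNReal

/-- The `n`-th Heisenberg group in exponential coordinates `(x, y, t) ∈ ℝⁿ × ℝⁿ × ℝ`. -/
abbrev Heis (n : ℕ) : Type := (Fin n → ℝ) × (Fin n → ℝ) × ℝ

/-- The Heisenberg group product. -/
noncomputable def heisMul {n : ℕ} (p q : Heis n) : Heis n :=
  (p.1 + q.1, p.2.1 + q.2.1,
    p.2.2 + q.2.2 + (∑ j, (p.1 j * q.2.1 j - q.1 j * p.2.1 j)) / 2)

/-- The Heisenberg dilations `δ_λ(x,y,t) = (λx, λy, λ²t)`. -/
noncomputable def heisDil {n : ℕ} (lam : ℝ) (p : Heis n) : Heis n :=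
  (lam • p.1, lam • p.2.1, lam ^ 2 * p.2.2)

/-- The squared Euclidean norm of the horizontal component. -/
noncomputable def horSq {n : ℕ} (x y : Fin n → ℝ) : ℝ := ∑ i, (x i ^ 2 + y i ^ 2)

/-- The `d`-dimensional spherical Hausdorff measure associated with a distance function
`ρ`, as a set function: the limit as `ε → 0⁺` of the infimum of `∑ (2 r_j)^d` over
countable coverings by closed `ρ`-balls of radii `r_j` with `2 r_j < ε`. -/
noncomputable def sphMeasFun {X : Type*} (ρ : X → X → ℝ) (d : ℝ) (E : Set X) : ℝ≥0∞ :=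
  ⨆ (ε : ℝ) (_ : 0 < ε),
    ⨅ (c : ℕ → X) (r : ℕ → ℝ)
      (_ : E ⊆ ⋃ m, {x : X | ρ (c m) x ≤ r m}) (_ : ∀ m, 0 < r m ∧ 2 * r m < ε),
      ∑' m, ENNReal.ofReal (2 * r m) ^ d

/-- The diameter, in `ℝ≥0∞`, of a set with respect to a distance function `ρ`. -/
noncomputable def diamFun {X : Type*} (ρ : X → X → ℝ) (s : Set X) : ℝ≥0∞ :=
  ⨆ (x : X) (_ : x ∈ s) (y : X) (_ : y ∈ s), ENNReal.ofReal (ρ x y)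

/-- The `d`-dimensional Hausdorff measure associated with a distance function `ρ`,
as a set function. -/
noncomputable def hausMeasFun {X : Type*} (ρ : X → X → ℝ) (d : ℝ) (E : Set X) : ℝ≥0∞ :=
  ⨆ (ε : ℝ≥0∞) (_ : 0 < ε),
    ⨅ (t : ℕ → Set X) (_ : E ⊆ ⋃ m, t m) (_ : ∀ m, diamFun ρ (t m) < ε),
      ∑' m, diamFun ρ (t m) ^ d

/-- The Euclidean distance on `Heis n ≅ ℝ^(2n+1)`. -/
noncomputable def heisEuclDist {n : ℕ} (p q : Heis n) : ℝ :=
  Real.sqrt (∑ i, (p.1 i - q.1 i) ^ 2 + ∑ i, (p.2.1 i - q.2.1 i) ^ 2 +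
    (p.2.2 - q.2.2) ^ 2)

open MeasureTheory Metric Set Filter Topology

/-!
By left-invariance and rotation invariance, the intersection of a ball with a vertical subgroup `P`
is, up to a translation and a volume-preserving shear of `P`, a model set depending only on the
radius and on the Euclidean distance from `P` of the horizontal component of the centre. Hence the
Haar measure `μ` of `P` has a constant spherical Federer density: the supremum of
`μ (B ∩ P) / (2 r) ^ d` over balls `B` of small radius `r` near a point of `P` depends neither on
the point nor on `P`. The Vitali covering theorem then gives that `μ` is this density times the
spherical measure, while the Euclidean Hausdorff measure on `P` is a multiple of `μ` by uniqueness
of Haar measure.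
-/

section HausdorffMeasure

theorem diamFun_image {X Y : Type*} (ρ : X → X → ℝ) (f : Y → X) (s : Set Y) :
    diamFun ρ (f '' s) = diamFun (fun a b => ρ (f a) (f b)) s := by
  simp only [diamFun, iSup_image]

theorem diamFun_mono {X : Type*} (ρ : X → X → ℝ) {s t : Set X} (hst : s ⊆ t) :
    diamFun ρ s ≤ diamFun ρ t :=
  (biSup_mono hst).trans (iSup₂_mono fun _ _ => biSup_mono hst)

theorem diamFun_dist {X : Type*} [PseudoMetricSpace X] (s : Set X) :
    diamFun (dist : X → X → ℝ) s = ediam s := by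
  simp only [diamFun, ediam, edist_dist]

theorem hausMeasFun_image {X Y : Type*} (ρ : X → X → ℝ) (f : Y → X) {d : ℝ} (hd : 0 ≤ d)
    (T : Set Y) :
    hausMeasFun ρ d (f '' T) = hausMeasFun (fun a b => ρ (f a) (f b)) d T := by
  have diam_preimage_le : ∀ t : Set X,
      diamFun (fun a b => ρ (f a) (f b)) (f ⁻¹' t) ≤ diamFun ρ t := fun t => by
    rw [← diamFun_image]
    exact diamFun_mono ρ (image_preimage_subset f t)
  refine iSup_congr fun ε => iSup_congr fun _ => le_antisymm ?_ ?_
  · refine le_iInf fun t => le_iInf₂ fun hT ht => ?_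
    refine iInf_le_of_le (fun m => f '' t m) (iInf₂_le_of_le ?_ (fun m => ?_) ?_)
    · rw [← image_iUnion]
      exact image_mono hT
    · rw [diamFun_image]
      exact ht m
    · simp only [diamFun_image, le_refl]
  · refine le_iInf fun t => le_iInf₂ fun hT ht => ?_
    refine iInf_le_of_le (fun m => f ⁻¹' t m) (iInf₂_le_of_le ?_ (fun m => ?_) ?_)
    · rw [← preimage_iUnion]
      exact image_subset_iff.1 hT
    · exact (diam_preimage_le _).trans_lt (ht m)
    · exact ENNReal.tsum_le_tsum fun m => ENNReal.rpow_le_rpow (diam_preimage_le _) hd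

theorem hausMeasFun_dist {X : Type*} [MetricSpace X] [MeasurableSpace X] [BorelSpace X]
    {d : ℝ} (hd : 0 < d) (T : Set X) :
    hausMeasFun dist d T = Measure.hausdorffMeasure d T := by
  have iSup_nonempty : ∀ t : Set X, ⨆ _ : t.Nonempty, ediam t ^ d = ediam t ^ d := fun t => by
    rcases t.eq_empty_or_nonempty with rfl | ht
    · simp [hd]
    · simp [ht]
  simp only [Measure.hausdorffMeasure_apply, iSup_nonempty, hausMeasFun, diamFun_dist]
  refine le_antisymm (iSup₂_le fun ε hε => ?_) (iSup₂_mono fun ε _ => ?_)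
  · obtain ⟨δ, hδ, hδε⟩ := exists_between hε
    refine le_iSup₂_of_le δ hδ (iInf_mono fun t => iInf_mono fun _ => ?_)
    exact iInf_mono' fun ht => ⟨fun m => (ht m).trans_lt hδε, le_rfl⟩
  · refine iInf_mono fun t => iInf_mono fun _ => ?_
    exact iInf_mono' fun ht => ⟨fun m => (ht m).le, le_rfl⟩

theorem exists_hausdorffMeasure_preimage_eq_mul {E F : Type*}
    [NormedAddCommGroup E] [NormedSpace ℝ E] [FiniteDimensional ℝ E]
    [MeasurableSpace E] [BorelSpace E] [NormedAddCommGroup F] [NormedSpace ℝ F]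
    [MeasurableSpace F] [BorelSpace F] (e : E ≃L[ℝ] F) (μ : Measure F) [μ.IsAddHaarMeasure] :
    ∃ κ : ℝ≥0∞, κ ≠ 0 ∧ κ ≠ ⊤ ∧ ∀ T : Set F,
      Measure.hausdorffMeasure (Module.finrank ℝ E : ℝ) (e ⁻¹' T) = κ * μ T := by
  have : FiniteDimensional ℝ F := e.toLinearEquiv.finiteDimensional
  let ν : Measure F := (Measure.hausdorffMeasure (Module.finrank ℝ E : ℝ) : Measure E).map e
  have : ν.IsAddHaarMeasure := e.isAddHaarMeasure_map _
  refine ⟨ν.addHaarScalarFactor μ, ?_, ENNReal.coe_ne_top, fun T => ?_⟩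
  · exact_mod_cast (ν.addHaarScalarFactor_pos_of_isAddHaarMeasure μ).ne'
  · have map_apply : ν T = Measure.hausdorffMeasure (Module.finrank ℝ E : ℝ) (e ⁻¹' T) :=
      e.toHomeomorph.toMeasurableEquiv.map_apply T
    rw [← map_apply]
    exact congrArg (· T) (Measure.isAddLeftInvariant_eq_smul ν μ)

end HausdorffMeasure

section SphericalMeasure

variable {X : Type*}

/-- The set `u` of pairs (centre, radius) is a countable cover of `E` by closed `ρ`-balls of
diameter bound `2r < ε`: the set-indexed form of the sequences of balls in `sphMeasFun`. -/
structure IsBallCover (ρ : X → X → ℝ) (ε : ℝ) (u : Set (X × ℝ)) (E : Set X) : Prop where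
  countable : u.Countable
  radius_pos : ∀ j ∈ u, 0 < j.2
  two_mul_radius_lt : ∀ j ∈ u, 2 * j.2 < ε
  subset : E ⊆ ⋃ j ∈ u, {x | ρ j.1 x ≤ j.2}

/-- The sum `∑ (2r)^d` of a family of balls given as pairs (centre, radius). -/
noncomputable def ballSum (d : ℝ) (u : Set (X × ℝ)) : ℝ≥0∞ :=
  ∑' j : u, ENNReal.ofReal (2 * (j : X × ℝ).2) ^ d

theorem ballSum_union_le (d : ℝ) (u v : Set (X × ℝ)) :
    ballSum d (u ∪ v) ≤ ballSum d u + ballSum d v :=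
  ENNReal.tsum_union_le (fun j : X × ℝ => ENNReal.ofReal (2 * j.2) ^ d) u v

theorem ballSum_image_mul_radius {c d : ℝ} (hc : 0 < c) (hd : 0 ≤ d) (u : Set (X × ℝ)) :
    ballSum d ((fun j => (j.1, c * j.2)) '' u) = ENNReal.ofReal c ^ d * ballSum d u := by
  have inj : Function.Injective fun j : X × ℝ => (j.1, c * j.2) :=
    Function.injective_id.prodMap (mul_right_injective₀ hc.ne')
  rw [ballSum, tsum_image (fun j : X × ℝ => ENNReal.ofReal (2 * j.2) ^ d) inj.injOn, ballSum,
    ← ENNReal.tsum_mul_left]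
  refine tsum_congr fun j => ?_
  rw [mul_left_comm, ENNReal.ofReal_mul hc.le, ENNReal.mul_rpow_of_nonneg _ _ hd]

theorem exists_pos_lt_ofReal_rpow_le {d ε : ℝ} (hd : 0 < d) (hε : 0 < ε) {δ : NNReal}
    (hδ : 0 < δ) : ∃ t : ℝ, 0 < t ∧ t < ε ∧ ENNReal.ofReal t ^ d ≤ δ := by
  refine ⟨min ((δ : ℝ) ^ d⁻¹) (ε / 2), by positivity,
    (min_le_right _ _).trans_lt (half_lt_self hε), ?_⟩
  rw [← ENNReal.le_rpow_inv_iff hd, ← ENNReal.ofReal_coe_nnreal,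
    ENNReal.ofReal_rpow_of_pos (by exact_mod_cast hδ)]
  exact ENNReal.ofReal_le_ofReal (min_le_left _ _)

-- Balls of total weight at most `η` are added, since a finite cover is not yet a sequence.
theorem IsBallCover.exists_seq [Nonempty X] {ρ : X → X → ℝ} {d ε : ℝ} (hd : 0 < d) (hε : 0 < ε)
    {u : Set (X × ℝ)} {E : Set X} (hu : IsBallCover ρ ε u E) {η : ℝ≥0∞} (hη : η ≠ 0) :
    ∃ (c : ℕ → X) (r : ℕ → ℝ), E ⊆ ⋃ m, {x | ρ (c m) x ≤ r m} ∧
      (∀ m, 0 < r m ∧ 2 * r m < ε) ∧ ∑' m, ENNReal.ofReal (2 * r m) ^ d ≤ ballSum d u + η := by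
  obtain ⟨δ, hδ, hδη⟩ := ENNReal.exists_pos_sum_of_countable hη ℕ
  choose t ht htε htδ using fun m => exists_pos_lt_ofReal_rpow_le hd hε (hδ m)
  have := hu.countable.to_subtype
  obtain ⟨e⟩ : Nonempty (ℕ ≃ u ⊕ ℕ) := nonempty_equiv_of_countable
  let ball : u ⊕ ℕ → X × ℝ := Sum.elim (↑) fun m => (Classical.arbitrary X, t m / 2)
  refine ⟨fun m => (ball (e m)).1, fun m => (ball (e m)).2, fun x hx => ?_, fun m => ?_, ?_⟩
  · obtain ⟨j, hj, hxj⟩ := mem_iUnion₂.1 (hu.subset hx)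
    exact mem_iUnion.2 ⟨e.symm (Sum.inl ⟨j, hj⟩), by simpa [ball] using hxj⟩
  · change 0 < (ball (e m)).2 ∧ 2 * (ball (e m)).2 < ε
    rcases e m with j | l
    · exact ⟨hu.radius_pos j j.2, hu.two_mul_radius_lt j j.2⟩
    · exact ⟨half_pos (ht l), (mul_div_cancel₀ (t l) two_ne_zero).trans_lt (htε l)⟩
  · rw [e.tsum_eq fun j => ENNReal.ofReal (2 * (ball j).2) ^ d,
      Summable.tsum_sum ENNReal.summable ENNReal.summable]
    refine add_le_add le_rfl ((ENNReal.tsum_le_tsum fun m => ?_).trans hδη.le)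
    simpa only [ball, Sum.elim_inr, mul_div_cancel₀ (t m) (two_ne_zero (α := ℝ))] using htδ m

theorem sphMeasFun_le_of_isBallCover [Nonempty X] {ρ : X → X → ℝ} {d : ℝ} (hd : 0 < d) {E : Set X}
    {A : ℝ≥0∞} (h : ∀ ε : ℝ, 0 < ε → ∀ η : ℝ≥0∞, η ≠ 0 →
      ∃ u, IsBallCover ρ ε u E ∧ ballSum d u ≤ A + η) :
    sphMeasFun ρ d E ≤ A := by
  refine iSup₂_le fun ε hε => ENNReal.le_of_forall_pos_le_add fun η hη _ => ?_
  have hη2 : (η : ℝ≥0∞) / 2 ≠ 0 := by simpa using hη.ne'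
  obtain ⟨u, hu, hsum⟩ := h ε hε _ hη2
  obtain ⟨c, r, hcov, hr, hcr⟩ := hu.exists_seq hd hε hη2
  refine iInf_le_of_le c (iInf_le_of_le r (iInf₂_le_of_le hcov hr ?_))
  calc ∑' m, ENNReal.ofReal (2 * r m) ^ d ≤ A + η / 2 + η / 2 := hcr.trans (by gcongr)
    _ = A + η := by rw [add_assoc, ENNReal.add_halves]

end SphericalMeasure

section SphericalDensity

variable {X : Type*} [PseudoMetricSpace X] [MeasurableSpace X] {μ : Measure X} {d : ℝ}
  {q Q : ℝ≥0∞} {P T U : Set X}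

/-- The measure `μ` has constant `d`-dimensional spherical Federer density `Q` along `P`, in the
following uniform sense: no ball has density above `Q`, and every `q < Q` is reached at each point
of `P` at each scale by a ball whose centre may lie off `P`, at distance comparable to its
radius. -/
structure HasSphericalDensity (μ : Measure X) (d : ℝ) (Q : ℝ≥0∞) (P : Set X) : Prop where
  measure_closedBall_le : ∀ z r, 0 < r → μ (closedBall z r) ≤ Q * ENNReal.ofReal (2 * r) ^ d
  exists_le_measure_closedBall : ∀ q < Q, ∃ K : ℝ, 0 ≤ K ∧ ∀ x ∈ P, ∀ r, 0 < r →
    ∃ z, dist x z ≤ K * r ∧ q * ENNReal.ofReal (2 * r) ^ d ≤ μ (closedBall z r)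

theorem measure_le_mul_sphMeasFun (hQ0 : Q ≠ 0) (hQt : Q ≠ ⊤)
    (hQ : ∀ z r, 0 < r → μ (closedBall z r) ≤ Q * ENNReal.ofReal (2 * r) ^ d) (T : Set X) :
    μ T ≤ Q * sphMeasFun dist d T := by
  rw [← ENNReal.div_le_iff' hQ0 hQt]
  refine le_iSup₂_of_le 1 one_pos (le_iInf fun c => le_iInf fun r => le_iInf₂ fun hcov hr => ?_)
  rw [ENNReal.div_le_iff' hQ0 hQt, ← ENNReal.tsum_mul_left]
  calc μ T ≤ μ (⋃ m, closedBall (c m) (r m)) :=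
        measure_mono (hcov.trans (iUnion_mono fun m x hx => mem_closedBall'.2 hx))
    _ ≤ ∑' m, μ (closedBall (c m) (r m)) := measure_iUnion_le _
    _ ≤ _ := ENNReal.tsum_le_tsum fun m => hQ _ _ (hr m).1

theorem mul_ballSum_le_measure [OpensMeasurableSpace X] {u : Set (X × ℝ)} (hu : u.Countable)
    (hdisj : u.PairwiseDisjoint fun j => closedBall j.1 j.2)
    (hU : ∀ j ∈ u, closedBall j.1 j.2 ⊆ U)
    (hq : ∀ j ∈ u, q * ENNReal.ofReal (2 * j.2) ^ d ≤ μ (closedBall j.1 j.2)) :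
    q * ballSum d u ≤ μ U := by
  rw [ballSum, ← ENNReal.tsum_mul_left]
  calc ∑' j : u, q * ENNReal.ofReal (2 * (j : X × ℝ).2) ^ d
      ≤ ∑' j : u, μ (closedBall (j : X × ℝ).1 (j : X × ℝ).2) :=
        ENNReal.tsum_le_tsum fun j => hq j j.2
    _ = μ (⋃ j ∈ u, closedBall j.1 j.2) :=
        (measure_biUnion hu hdisj fun _ _ => isClosed_closedBall.measurableSet).symm
    _ ≤ μ U := measure_mono (iUnion₂_subset hU)

theorem exists_isBallCover_of_measure_zero [BorelSpace X] [SecondCountableTopology X]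
    [IsLocallyFiniteMeasure μ] (hd : 0 ≤ d) (hq0 : q ≠ 0) (hqt : q ≠ ⊤)
    (hq : ∀ x ∈ T, ∀ r, 0 < r → q * ENNReal.ofReal (2 * r) ^ d ≤ μ (closedBall x r))
    (hT : μ T = 0) {ε : ℝ} (hε : 0 < ε) {η : ℝ≥0∞} (hη : η ≠ 0) :
    ∃ u, IsBallCover dist ε u T ∧ ballSum d u ≤ η := by
  have h5 : ENNReal.ofReal 5 ^ d ≠ ⊤ := by finiteness
  have h50 : ENNReal.ofReal 5 ^ d ≠ 0 := by simp
  obtain ⟨U, hTU, hUo, hU⟩ := T.exists_isOpen_le_add μ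
    (ENNReal.div_ne_zero.2 ⟨mul_ne_zero hq0 hη, h5⟩)
  obtain ⟨u, hut, hdisj, hcov⟩ :=
    Vitali.exists_disjoint_subfamily_covering_enlargement_closedBall
      {j : X × ℝ | j.1 ∈ T ∧ 0 < j.2 ∧ 2 * (5 * j.2) < ε ∧ closedBall j.1 j.2 ⊆ U}
      Prod.fst Prod.snd ε (fun j hj => by linarith [hj.2.1, hj.2.2.1]) 5 (by norm_num)
  have hu : u.Countable := hdisj.countable_of_nonempty_interior fun j hj =>
    ⟨j.1, ball_subset_interior_closedBall (mem_ball_self (hut hj).2.1)⟩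
  refine ⟨(fun j => (j.1, 5 * j.2)) '' u, ⟨hu.image _, ?_, ?_, fun x hx => ?_⟩, ?_⟩
  · rintro _ ⟨j, hj, rfl⟩
    exact mul_pos (by norm_num) (hut hj).2.1
  · rintro _ ⟨j, hj, rfl⟩
    exact (hut hj).2.2.1
  · obtain ⟨δ, hδ, hδU⟩ := Metric.isOpen_iff.1 hUo x (hTU hx)
    have hr : 0 < min (δ / 2) (ε / 11) := by positivity
    have hxt : closedBall x (min (δ / 2) (ε / 11)) ⊆ U :=
      (closedBall_subset_ball ((min_le_left _ _).trans_lt (half_lt_self hδ))).trans hδU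
    obtain ⟨j, hj, hsub⟩ := hcov (x, min (δ / 2) (ε / 11))
      ⟨hx, hr, by linarith [min_le_right (δ / 2) (ε / 11)], hxt⟩
    exact mem_biUnion (mem_image_of_mem _ hj) (mem_closedBall'.1 (hsub (mem_closedBall_self hr.le)))
  · have hsum : q * ballSum d u ≤ q * η / ENNReal.ofReal 5 ^ d :=
      (mul_ballSum_le_measure hu hdisj (fun j hj => (hut hj).2.2.2) fun j hj =>
        hq _ (hut hj).1 _ (hut hj).2.1).trans (by simpa only [hT, zero_add] using hU)
    rwa [mul_div_assoc, ENNReal.mul_le_mul_iff_right hq0 hqt,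
      ENNReal.le_div_iff_mul_le (.inl h50) (.inl h5), mul_comm,
      ← ballSum_image_mul_radius (by norm_num) hd] at hsum

namespace HasSphericalDensity

theorem isLocallyFiniteMeasure (h : HasSphericalDensity μ d Q P) (hd : 0 ≤ d) (hQt : Q ≠ ⊤) :
    IsLocallyFiniteMeasure μ where
  finiteAtNhds x := ⟨closedBall x 1, closedBall_mem_nhds x one_pos,
    (h.measure_closedBall_le x 1 one_pos).trans_lt
      (ENNReal.mul_lt_top hQt.lt_top
        (ENNReal.rpow_lt_top_of_nonneg hd ENNReal.ofReal_ne_top))⟩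

theorem exists_le_measure_closedBall_self (h : HasSphericalDensity μ d Q P) (hd : 0 ≤ d)
    (hQ0 : Q ≠ 0) : ∃ q : ℝ≥0∞, q ≠ 0 ∧ q ≠ ⊤ ∧ ∀ x ∈ P, ∀ r, 0 < r →
      q * ENNReal.ofReal (2 * r) ^ d ≤ μ (closedBall x r) := by
  obtain ⟨q, hq0, hqQ⟩ := exists_between (pos_iff_ne_zero.2 hQ0)
  obtain ⟨K, hK, hball⟩ := h.exists_le_measure_closedBall q hqQ
  have hK1 : 0 < K + 1 := by linarith
  have hKd0 : ENNReal.ofReal (K + 1) ^ d ≠ 0 :=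
    (ENNReal.rpow_pos (ENNReal.ofReal_pos.2 hK1) ENNReal.ofReal_ne_top).ne'
  have hKdt : ENNReal.ofReal (K + 1) ^ d ≠ ⊤ := by finiteness
  refine ⟨q / ENNReal.ofReal (K + 1) ^ d, ENNReal.div_ne_zero.2 ⟨hq0.ne', hKdt⟩,
    ENNReal.div_ne_top (hqQ.trans_le le_top).ne hKd0, fun x hx r hr => ?_⟩
  obtain ⟨z, hxz, hz⟩ := hball x hx (r / (K + 1)) (by positivity)
  calc q / ENNReal.ofReal (K + 1) ^ d * ENNReal.ofReal (2 * r) ^ d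
      = q * ENNReal.ofReal (2 * (r / (K + 1))) ^ d := by
        rw [← mul_div_assoc, ENNReal.ofReal_div_of_pos hK1, ENNReal.div_rpow_of_nonneg _ _ hd,
          ENNReal.mul_comm_div]
    _ ≤ μ (closedBall z (r / (K + 1))) := hz
    _ ≤ μ (closedBall x r) := measure_mono (closedBall_subset_closedBall' ?_)
  have : r / (K + 1) + K * (r / (K + 1)) = r := by field_simp; ring
  linarith [dist_comm x z]

theorem measure_closedBall_mul_le (h : HasSphericalDensity μ d Q P) {c : ℝ} (hc : 0 < c)
    (hd : 0 ≤ d) (hQt : Q ≠ ⊤) (hq0 : q ≠ 0) (hqt : q ≠ ⊤) {z : X} {r : ℝ} (hr : 0 < r)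
    (hz : q * ENNReal.ofReal (2 * r) ^ d ≤ μ (closedBall z r)) (x : X) :
    μ (closedBall x (c * r)) ≤
      (Q * ENNReal.ofReal c ^ d / q).toNNReal * μ (closedBall z r) := by
  rw [ENNReal.coe_toNNReal (ENNReal.div_ne_top
    (ENNReal.mul_ne_top hQt (ENNReal.rpow_ne_top_of_nonneg hd ENNReal.ofReal_ne_top)) hq0)]
  calc μ (closedBall x (c * r))
      ≤ Q * ENNReal.ofReal (2 * (c * r)) ^ d := h.measure_closedBall_le _ _ (by positivity)
    _ = Q * ENNReal.ofReal c ^ d / q * (q * ENNReal.ofReal (2 * r) ^ d) := by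
        rw [mul_left_comm, ENNReal.ofReal_mul hc.le, ENNReal.mul_rpow_of_nonneg _ _ hd,
          ← mul_assoc, ← mul_assoc, ENNReal.div_mul_cancel hq0 hqt]
    _ ≤ _ := by gcongr

theorem exists_disjoint_closedBalls_covering_ae [OpensMeasurableSpace X]
    [SecondCountableTopology X] (h : HasSphericalDensity μ d Q P) (hd : 0 ≤ d) (hQt : Q ≠ ⊤)
    (hq0 : q ≠ 0) (hqQ : q < Q) (hTP : T ⊆ P) (hU : IsOpen U) (hTU : T ⊆ U) {ε : ℝ} (hε : 0 < ε) :
    ∃ u : Set (X × ℝ), u.Countable ∧ u.PairwiseDisjoint (fun j => closedBall j.1 j.2) ∧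
      (∀ j ∈ u, 0 < j.2 ∧ 2 * j.2 < ε ∧ closedBall j.1 j.2 ⊆ U ∧
        q * ENNReal.ofReal (2 * j.2) ^ d ≤ μ (closedBall j.1 j.2)) ∧
      μ (T \ ⋃ j ∈ u, closedBall j.1 j.2) = 0 := by
  have := h.isLocallyFiniteMeasure hd hQt
  obtain ⟨K, hK, hball⟩ := h.exists_le_measure_closedBall q hqQ
  have ball_subset : ∀ {x z : X} {r : ℝ}, dist x z ≤ K * r →
      closedBall z r ⊆ closedBall x ((K + 1) * r) := fun {x z r} hxz =>
    closedBall_subset_closedBall' (by linarith [dist_comm x z])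
  -- Dense balls need not be centred in `T`: each index `(x, z, r)` pairs a point `x` with a
  -- dense ball near it, and the fineness condition concerns the larger balls around `x`.
  let t : Set (X × (X × ℝ)) := {j | 0 < j.2.2 ∧ 2 * j.2.2 < ε ∧ dist j.1 j.2.1 ≤ K * j.2.2 ∧
    closedBall j.1 ((K + 1) * j.2.2) ⊆ U ∧
    q * ENNReal.ofReal (2 * j.2.2) ^ d ≤ μ (closedBall j.2.1 j.2.2)}
  have fine : ∀ x ∈ T, ∀ e > 0, ∃ j ∈ t, (K + 1) * j.2.2 ≤ e ∧ j.1 = x := by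
    intro x hx e he
    obtain ⟨δ, hδ, hδU⟩ := Metric.isOpen_iff.1 hU x (hTU hx)
    obtain ⟨r, hr, hrlt⟩ := exists_between
      (show 0 < min (ε / 2) (min e δ / (K + 1)) by positivity)
    rw [lt_min_iff, lt_div_iff₀' (by linarith), lt_div_iff₀' (by linarith), lt_min_iff] at hrlt
    obtain ⟨z, hxz, hz⟩ := hball x (hTP hx) r hr
    exact ⟨(x, z, r), ⟨hr, by linarith, hxz,
      (closedBall_subset_ball (by linarith)).trans hδU, hz⟩, by linarith, rfl⟩
  obtain ⟨u, hut, hu, hdisj, hcov⟩ := Vitali.exists_disjoint_covering_ae μ T t _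
    (fun j => (K + 1) * j.2.2) Prod.fst (fun j => closedBall j.2.1 j.2.2)
    (fun j hj => ball_subset hj.2.2.1)
    (fun j hj => by simpa only [← mul_assoc] using
      h.measure_closedBall_mul_le (by positivity) hd hQt hq0 hqQ.ne_top hj.1 hj.2.2.2.2 j.1)
    (fun j hj => ⟨j.2.1, ball_subset_interior_closedBall (mem_ball_self hj.1)⟩)
    (fun _ _ => isClosed_closedBall) fine
  refine ⟨Prod.snd '' u, hu.image _, ?_, ?_, by rwa [biUnion_image]⟩
  · rintro _ ⟨i, hi, rfl⟩ _ ⟨j, hj, rfl⟩ hij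
    exact hdisj hi hj (ne_of_apply_ne _ hij)
  · rintro _ ⟨j, hj, rfl⟩
    obtain ⟨hr, hrε, hxz, hxU, hz⟩ := hut hj
    exact ⟨hr, hrε, (ball_subset hxz).trans hxU, hz⟩

theorem exists_isBallCover [BorelSpace X] [SecondCountableTopology X]
    (h : HasSphericalDensity μ d Q P) (hd : 0 ≤ d) (hQt : Q ≠ ⊤) (hq0 : q ≠ 0) (hqQ : q < Q)
    (hTP : T ⊆ P) {ε : ℝ} (hε : 0 < ε) {η : ℝ≥0∞} (hη : η ≠ 0) :
    ∃ u, IsBallCover dist ε u T ∧ ballSum d u ≤ μ T / q + η := by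
  have := h.isLocallyFiniteMeasure hd hQt
  have hqt : q ≠ ⊤ := hqQ.ne_top
  have hη2 : η / 2 ≠ 0 := by simpa using hη
  obtain ⟨U, hTU, hUo, hU⟩ := T.exists_isOpen_le_add μ (mul_ne_zero hq0 hη2)
  obtain ⟨u, hu, hdisj, hball, hnull⟩ :=
    h.exists_disjoint_closedBalls_covering_ae hd hQt hq0 hqQ hTP hUo hTU hε
  obtain ⟨q', hq'0, hq't, hq'⟩ := h.exists_le_measure_closedBall_self hd (hqQ.bot_lt.ne')
  obtain ⟨v, hv, hvsum⟩ := exists_isBallCover_of_measure_zero hd hq'0 hq't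
    (fun x hx => hq' x (hTP hx.1)) hnull hε hη2
  have husum : ballSum d u ≤ μ T / q + η / 2 := by
    have := (mul_ballSum_le_measure hu hdisj (fun j hj => (hball j hj).2.2.1)
      fun j hj => (hball j hj).2.2.2).trans hU
    rwa [mul_comm, ← ENNReal.le_div_iff_mul_le (.inl hq0) (.inl hqt), ENNReal.add_div,
      mul_comm q, ENNReal.mul_div_cancel_right hq0 hqt] at this
  refine ⟨u ∪ v, ⟨hu.union hv.countable, ?_, ?_, fun x hx => ?_⟩, ?_⟩
  · exact fun j hj => hj.elim (fun hj => (hball j hj).1) (hv.radius_pos j)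
  · exact fun j hj => hj.elim (fun hj => (hball j hj).2.1) (hv.two_mul_radius_lt j)
  · by_cases hxu : x ∈ ⋃ j ∈ u, closedBall j.1 j.2
    · obtain ⟨j, hj, hxj⟩ := mem_iUnion₂.1 hxu
      exact mem_biUnion (.inl hj) (mem_closedBall'.1 hxj)
    · exact biUnion_mono subset_union_right (fun _ _ => Subset.rfl) (hv.subset ⟨hx, hxu⟩)
  · calc ballSum d (u ∪ v) ≤ μ T / q + η / 2 + η / 2 :=
          (ballSum_union_le d u v).trans (add_le_add husum hvsum)
      _ = μ T / q + η := by rw [add_assoc, ENNReal.add_halves]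

theorem mul_sphMeasFun_eq_measure [Nonempty X] [BorelSpace X] [SecondCountableTopology X]
    (h : HasSphericalDensity μ d Q P) (hd : 0 < d) (hQ0 : Q ≠ 0) (hQt : Q ≠ ⊤) (hTP : T ⊆ P) :
    Q * sphMeasFun dist d T = μ T := by
  refine le_antisymm (ENNReal.mul_le_of_forall_lt fun q hqQ s hs => ?_)
    (measure_le_mul_sphMeasFun hQ0 hQt h.measure_closedBall_le T)
  rcases eq_or_ne q 0 with rfl | hq0
  · simp only [zero_mul, zero_le]
  · have : sphMeasFun dist d T ≤ μ T / q := sphMeasFun_le_of_isBallCover hd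
      fun ε hε η hη => h.exists_isBallCover hd.le hQt hq0 hqQ hTP hε hη
    exact ENNReal.mul_le_of_le_div' (hs.le.trans this)

end HasSphericalDensity

end SphericalDensity

section HeisenbergGroup

variable {n : ℕ}

theorem heisMul_zero (p : Heis n) : heisMul p 0 = p := by
  simp [heisMul]

theorem heisMul_neg_self (p : Heis n) : heisMul (-p) p = 0 := by
  ext <;> simp [heisMul]

theorem heisMul_self_neg (p : Heis n) : heisMul p (-p) = 0 := by
  ext <;> simp [heisMul]

theorem heisMul_neg_cancel_left (p q : Heis n) : heisMul p (heisMul (-p) q) = q := by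
  simp only [heisMul, Prod.fst_neg, Prod.snd_neg, Pi.neg_apply, Pi.add_apply, add_neg_cancel_left]
  refine Prod.ext rfl (Prod.ext rfl ?_)
  have : ∑ j, (p.1 j * (-p.2.1 j + q.2.1 j) - (-p.1 j + q.1 j) * p.2.1 j) =
      -∑ j, (-p.1 j * q.2.1 j - q.1 j * -p.2.1 j) := by
    rw [← Finset.sum_neg_distrib]
    exact Finset.sum_congr rfl fun j _ => by ring
  simp only [this]
  ring

theorem heisDil_zero_right (l : ℝ) : heisDil l (0 : Heis n) = 0 := by
  simp [heisDil]

theorem heisDil_heisDil (a b : ℝ) (p : Heis n) : heisDil a (heisDil b p) = heisDil (a * b) p := by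
  simp only [heisDil, smul_smul, mul_pow, mul_assoc]

theorem heisDil_one (p : Heis n) : heisDil 1 p = p := by
  simp [heisDil]

theorem continuous_heisMul_left (p : Heis n) : Continuous (heisMul p) := by
  unfold heisMul
  fun_prop

/-- The homogeneous gauge `max (‖x‖_∞, ‖y‖_∞, √|t|)` on the Heisenberg group, which is compared
with `p ↦ ρ 0 p` for homogeneous distances `ρ`. -/
noncomputable def heisGauge (p : Heis n) : ℝ := max (max ‖p.1‖ ‖p.2.1‖) √|p.2.2|

theorem continuous_heisGauge : Continuous (heisGauge : Heis n → ℝ) := by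
  unfold heisGauge
  fun_prop

theorem heisGauge_nonneg (p : Heis n) : 0 ≤ heisGauge p :=
  (Real.sqrt_nonneg _).trans (le_max_right _ _)

theorem abs_snd_snd_le_heisGauge_sq (p : Heis n) : |p.2.2| ≤ heisGauge p ^ 2 :=
  (Real.sqrt_le_left (heisGauge_nonneg p)).1 (le_max_right _ _)

theorem norm_le_max_heisGauge (p : Heis n) : ‖p‖ ≤ max (heisGauge p) (heisGauge p ^ 2) := by
  simp only [norm_prod_le_iff]
  exact ⟨((le_max_left _ _).trans (le_max_left _ _)).trans (le_max_left _ _),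
    ((le_max_right _ _).trans (le_max_left _ _)).trans (le_max_left _ _),
    (abs_snd_snd_le_heisGauge_sq p).trans (le_max_right _ _)⟩

theorem heisGauge_heisDil {l : ℝ} (hl : 0 ≤ l) (p : Heis n) :
    heisGauge (heisDil l p) = l * heisGauge p := by
  simp only [heisGauge, heisDil, norm_smul, Real.norm_of_nonneg hl, abs_mul, abs_sq,
    Real.sqrt_mul (sq_nonneg l), Real.sqrt_sq hl, mul_max_of_nonneg _ _ hl]

theorem heisGauge_pos {p : Heis n} (hp : p ≠ 0) : 0 < heisGauge p := by
  refine (heisGauge_nonneg p).lt_of_ne' fun h => hp (norm_le_zero_iff.1 ?_)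
  simpa [h] using norm_le_max_heisGauge p

theorem isCompact_heisGauge_eq_one : IsCompact {p : Heis n | heisGauge p = 1} :=
  (isCompact_closedBall 0 1).of_isClosed_subset (isClosed_eq continuous_heisGauge continuous_const)
    fun p (hp : heisGauge p = 1) => by simpa [hp] using norm_le_max_heisGauge p

end HeisenbergGroup

/-- A homogeneous distance on the Heisenberg group: a distance that is left-invariant and
one-homogeneous with respect to the dilations. Continuity is not assumed, it follows. -/
structure IsHomogeneousDist {n : ℕ} (ρ : Heis n → Heis n → ℝ) : Prop where
  eq_zero_iff : ∀ p q, ρ p q = 0 ↔ p = q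
  symm : ∀ p q, ρ p q = ρ q p
  triangle : ∀ p q r, ρ p r ≤ ρ p q + ρ q r
  map_heisMul : ∀ g p q, ρ (heisMul g p) (heisMul g q) = ρ p q
  map_heisDil : ∀ l : ℝ, 0 < l → ∀ p q, ρ (heisDil l p) (heisDil l q) = l * ρ p q

namespace IsHomogeneousDist

variable {n : ℕ} {ρ : Heis n → Heis n → ℝ} (hρ : IsHomogeneousDist ρ)

include hρ

theorem self_eq_zero (p : Heis n) : ρ p p = 0 := (hρ.eq_zero_iff p p).2 rfl

theorem nonneg (p q : Heis n) : 0 ≤ ρ p q := by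
  linarith [hρ.triangle p q p, hρ.symm p q, hρ.self_eq_zero p]

theorem eq_zero_heisMul (p q : Heis n) : ρ p q = ρ 0 (heisMul (-p) q) := by
  rw [← hρ.map_heisMul (-p) p q, heisMul_neg_self]

theorem heisMul_right (p q : Heis n) : ρ p (heisMul p q) = ρ 0 q := by
  simpa only [heisMul_zero] using hρ.map_heisMul p 0 q

theorem zero_heisMul_le (p q : Heis n) : ρ 0 (heisMul p q) ≤ ρ 0 p + ρ 0 q := by
  simpa only [hρ.heisMul_right] using hρ.triangle 0 p (heisMul p q)

theorem zero_neg (p : Heis n) : ρ 0 (-p) = ρ 0 p := by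
  rw [← hρ.heisMul_right p, heisMul_self_neg, hρ.symm]

theorem zero_heisDil {l : ℝ} (hl : 0 ≤ l) (p : Heis n) : ρ 0 (heisDil l p) = l * ρ 0 p := by
  rcases hl.eq_or_lt with rfl | hl
  · simp [heisDil, ← Prod.zero_eq_mk, hρ.self_eq_zero]
  · simpa only [heisDil_zero_right] using hρ.map_heisDil l hl 0 p

theorem zero_vertical (t : ℝ) : ρ 0 (0, 0, t) = √|t| * ρ 0 (0, 0, 1) := by
  rw [← hρ.zero_heisDil (Real.sqrt_nonneg _)]
  simp only [heisDil, smul_zero, mul_one, Real.sq_sqrt (abs_nonneg t)]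
  rcases abs_choice t with ht | ht
  · rw [ht]
  · rw [ht, ← hρ.zero_neg]
    simp

theorem continuous_comp_of_map_add {E : Type*} [NormedAddCommGroup E] [NormedSpace ℝ E]
    [FiniteDimensional ℝ E] {f : E → Heis n} (map_add : ∀ v w, f (v + w) = heisMul (f v) (f w))
    (map_smul : ∀ (a : ℝ) v, f (a • v) = heisDil a (f v)) : Continuous fun v => ρ 0 (f v) := by
  have convex : ConvexOn ℝ univ fun v => ρ 0 (f v) := by
    refine ⟨convex_univ, fun v _ w _ a b ha hb _ => ?_⟩
    simpa only [map_add, map_smul, hρ.zero_heisDil ha, hρ.zero_heisDil hb, smul_eq_mul] using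
      hρ.zero_heisMul_le (f (a • v)) (f (b • w))
  exact continuousOn_univ.1 (convex.continuousOn isOpen_univ)

theorem tendsto_zero : Tendsto (ρ 0) (𝓝 0) (𝓝 0) := by
  let bound : Heis n → ℝ := fun p => ρ 0 (p.1, 0, 0) + ρ 0 (0, p.2.1, 0) +
    √|p.2.2 - (∑ j, p.1 j * p.2.1 j) / 2| * ρ 0 (0, 0, 1)
  have le_bound : ∀ p, ρ 0 p ≤ bound p := fun p => by
    have decomposition : heisMul (heisMul (p.1, 0, 0) (0, p.2.1, 0))
        (0, 0, p.2.2 - (∑ j, p.1 j * p.2.1 j) / 2) = p := by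
      refine Prod.ext ?_ (Prod.ext ?_ ?_) <;> simp [heisMul]
    rw [← decomposition]
    refine (hρ.zero_heisMul_le _ _).trans ?_
    rw [hρ.zero_vertical, decomposition]
    exact add_le_add_left (hρ.zero_heisMul_le _ _) _
  have continuous_x : Continuous fun x : Fin n → ℝ => ρ 0 (x, 0, 0) :=
    hρ.continuous_comp_of_map_add (f := fun x => (x, 0, 0)) (by simp [heisMul]) (by simp [heisDil])
  have continuous_y : Continuous fun y : Fin n → ℝ => ρ 0 (0, y, 0) :=
    hρ.continuous_comp_of_map_add (f := fun y => (0, y, 0)) (by simp [heisMul]) (by simp [heisDil])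
  have continuous_bound : Continuous bound :=
    ((continuous_x.comp continuous_fst).add
      (continuous_y.comp (continuous_fst.comp continuous_snd))).add (by fun_prop)
  refine squeeze_zero (hρ.nonneg 0) le_bound ?_
  simpa [bound, ← Prod.zero_eq_mk, hρ.self_eq_zero] using continuous_bound.tendsto 0

theorem continuous (p : Heis n) : Continuous (ρ p) := by
  refine continuous_iff_continuousAt.2 fun q => ?_
  have dist_tendsto : Tendsto (ρ q) (𝓝 q) (𝓝 0) := by
    have := (continuous_heisMul_left (-q)).tendsto q
    rw [heisMul_neg_self] at this
    simpa only [Function.comp_def, ← hρ.eq_zero_heisMul] using hρ.tendsto_zero.comp this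
  refine tendsto_iff_dist_tendsto_zero.2 (squeeze_zero (fun _ => dist_nonneg) (fun x => ?_)
    dist_tendsto)
  rw [Real.dist_eq, abs_sub_le_iff]
  constructor <;> linarith [hρ.triangle p q x, hρ.triangle p x q, hρ.symm q x]

theorem exists_mul_heisGauge_le : ∃ c : ℝ, 0 < c ∧ ∀ p, c * heisGauge p ≤ ρ 0 p := by
  obtain ⟨c, hc, hle⟩ := isCompact_heisGauge_eq_one.exists_forall_le' (hρ.continuous 0).continuousOn
    (a := 0) fun p (hp : heisGauge p = 1) => (hρ.nonneg 0 p).lt_of_ne' fun h => by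
      simp [heisGauge, ← (hρ.eq_zero_iff 0 p).1 h] at hp
  refine ⟨c, hc, fun p => ?_⟩
  rcases eq_or_ne p 0 with rfl | hp
  · simp [heisGauge, hρ.self_eq_zero]
  · have hg := heisGauge_pos hp
    have hunit : heisGauge (heisDil (heisGauge p)⁻¹ p) = 1 := by
      rw [heisGauge_heisDil (inv_nonneg.2 hg.le), inv_mul_cancel₀ hg.ne']
    calc c * heisGauge p ≤ heisGauge p * ρ 0 (heisDil (heisGauge p)⁻¹ p) := by
          rw [mul_comm]; gcongr; exact hle _ hunit
      _ = ρ 0 p := by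
          rw [← hρ.zero_heisDil hg.le, heisDil_heisDil, mul_inv_cancel₀ hg.ne', heisDil_one]

theorem isOpen_iff (s : Set (Heis n)) :
    IsOpen s ↔ ∀ p ∈ s, ∃ ε > 0, ∀ q, ρ p q < ε → q ∈ s := by
  refine ⟨fun hs p hp => ?_, fun h => isOpen_iff_mem_nhds.2 fun p hp => ?_⟩
  · obtain ⟨c, hc, hle⟩ := hρ.exists_mul_heisGauge_le
    have h0 : heisMul p ⁻¹' s ∈ 𝓝 0 := (hs.preimage (continuous_heisMul_left p)).mem_nhds
      (by rwa [mem_preimage, heisMul_zero])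
    obtain ⟨δ, hδ, hball⟩ := Metric.mem_nhds_iff.1 h0
    refine ⟨c * min δ √δ, by positivity, fun q hq => ?_⟩
    rw [hρ.eq_zero_heisMul] at hq
    have hgauge : heisGauge (heisMul (-p) q) < min δ √δ :=
      lt_of_mul_lt_mul_left ((hle _).trans_lt hq) hc.le
    have hmem : heisMul (-p) q ∈ ball 0 δ := by
      rw [mem_ball_zero_iff]
      exact (norm_le_max_heisGauge _).trans_lt (max_lt (hgauge.trans_le (min_le_left _ _))
        ((Real.lt_sqrt (heisGauge_nonneg _)).1 (hgauge.trans_le (min_le_right _ _))))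
    simpa only [mem_preimage, heisMul_neg_cancel_left] using hball hmem
  · obtain ⟨ε, hε, hsub⟩ := h p hp
    have : ∀ᶠ q in 𝓝 p, ρ p q < ε :=
      (hρ.continuous p).tendsto p |>.eventually_lt_const (by rwa [hρ.self_eq_zero])
    exact this.mono hsub

/-- The metric structure on `Heis n` given by a homogeneous distance. Its topology is the product
topology, definitionally, so that the Borel and second countable instances of `Heis n` apply. -/
abbrev toPseudoMetricSpace : PseudoMetricSpace (Heis n) :=
  .ofDistTopology ρ hρ.self_eq_zero hρ.symm hρ.triangle hρ.isOpen_iff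

end IsHomogeneousDist

section HorizontalCoordinates

variable {n : ℕ}

/-- The horizontal layer `ℝⁿ × ℝⁿ` of the Heisenberg group, with its Euclidean norm. -/
noncomputable def horizontalEquiv (n : ℕ) :
    EuclideanSpace ℝ (Fin n ⊕ Fin n) ≃ₗ[ℝ] (Fin n → ℝ) × (Fin n → ℝ) :=
  (WithLp.linearEquiv 2 ℝ _).trans (LinearEquiv.sumArrowLequivProdArrow (Fin n) (Fin n) ℝ ℝ)

theorem horSq_horizontalEquiv (w : EuclideanSpace ℝ (Fin n ⊕ Fin n)) :
    horSq (horizontalEquiv n w).1 (horizontalEquiv n w).2 = ‖w‖ ^ 2 := by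
  simp [horSq, horizontalEquiv, EuclideanSpace.norm_sq_eq, Finset.sum_add_distrib]

/-- The point of `Heis n` with horizontal component `w` and vertical component `t`. -/
noncomputable def heisMk (w : EuclideanSpace ℝ (Fin n ⊕ Fin n)) (t : ℝ) : Heis n :=
  ((horizontalEquiv n w).1, (horizontalEquiv n w).2, t)

/-- Half the standard symplectic form on the horizontal layer: the vertical correction in the
product of two points. -/
noncomputable def halfSymplectic (w w' : EuclideanSpace ℝ (Fin n ⊕ Fin n)) : ℝ :=
  (∑ j, ((horizontalEquiv n w).1 j * (horizontalEquiv n w').2 j -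
    (horizontalEquiv n w').1 j * (horizontalEquiv n w).2 j)) / 2

theorem heisMul_heisMk (w w' : EuclideanSpace ℝ (Fin n ⊕ Fin n)) (t t' : ℝ) :
    heisMul (heisMk w t) (heisMk w' t') = heisMk (w + w') (t + t' + halfSymplectic w w') := by
  simp only [heisMul, heisMk, halfSymplectic, map_add, Prod.fst_add, Prod.snd_add]

theorem neg_heisMk (w : EuclideanSpace ℝ (Fin n ⊕ Fin n)) (t : ℝ) :
    -heisMk w t = heisMk (-w) (-t) := by
  simp only [heisMk, map_neg, Prod.neg_mk, Prod.fst_neg, Prod.snd_neg]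

theorem exists_eq_heisMk (p : Heis n) : ∃ w t, p = heisMk w t :=
  ⟨(horizontalEquiv n).symm (p.1, p.2.1), p.2.2, by simp [heisMk]⟩

theorem heisMk_injective2 : Function.Injective2 (heisMk (n := n)) := fun w w' t t' h => by
  simp only [heisMk, Prod.mk.injEq] at h
  exact ⟨(horizontalEquiv n).injective (Prod.ext h.1 h.2.1), h.2.2⟩

theorem continuous_horizontalEquiv : Continuous (horizontalEquiv n) :=
  (horizontalEquiv n).toLinearMap.continuous_of_finiteDimensional

theorem continuous_halfSymplectic (w : EuclideanSpace ℝ (Fin n ⊕ Fin n)) :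
    Continuous (halfSymplectic w) := by
  have := continuous_horizontalEquiv (n := n)
  unfold halfSymplectic
  fun_prop

theorem heisEuclDist_heisMk (w w' : EuclideanSpace ℝ (Fin n ⊕ Fin n)) (t t' : ℝ) :
    heisEuclDist (heisMk w t) (heisMk w' t') = √(dist w w' ^ 2 + dist t t' ^ 2) := by
  rw [dist_eq_norm, ← horSq_horizontalEquiv, Real.dist_eq, sq_abs]
  simp only [heisEuclDist, heisMk, horSq, map_sub, Prod.fst_sub, Prod.snd_sub, Pi.sub_apply,
    Finset.sum_add_distrib]

end HorizontalCoordinates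

/-- A distance is rotation invariant if the distance from the identity depends only on the
Euclidean norm of the horizontal component and on the vertical component. -/
def IsRotationInvariant {n : ℕ} (ρ : Heis n → Heis n → ℝ) : Prop :=
  ∀ (x y x' y' : Fin n → ℝ) (t : ℝ), horSq x y = horSq x' y' → ρ 0 (x, y, t) = ρ 0 (x', y', t)

/-- For rotation invariant `ρ`, `profile ρ s t` is the `ρ`-distance from the identity of the points
with squared horizontal norm `s ≥ 0` and vertical component `t`. Using the squared norm makes
the profile additive along orthogonal decompositions. -/
noncomputable def profile {n : ℕ} (ρ : Heis n → Heis n → ℝ) (s t : ℝ) : ℝ :=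
  ρ 0 (fun _ => √(s / n), 0, t)

theorem IsRotationInvariant.zero_heisMk {n : ℕ} {ρ : Heis n → Heis n → ℝ}
    (hrot : IsRotationInvariant ρ) (hn : n ≠ 0) (w : EuclideanSpace ℝ (Fin n ⊕ Fin n)) (t : ℝ) :
    ρ 0 (heisMk w t) = profile ρ (‖w‖ ^ 2) t := by
  refine hrot _ _ _ _ t ?_
  rw [horSq_horizontalEquiv]
  have sq_sqrt : √(‖w‖ ^ 2 / n) ^ 2 = ‖w‖ ^ 2 / n := Real.sq_sqrt (by positivity)
  simp only [horSq, sq_sqrt, Pi.zero_apply, ne_eq, OfNat.ofNat_ne_zero, not_false_eq_true, zero_pow,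
    add_zero, Finset.sum_const, Finset.card_univ, Fintype.card_fin, nsmul_eq_mul]
  field_simp

namespace IsHomogeneousDist

variable {n : ℕ} {ρ : Heis n → Heis n → ℝ} (hρ : IsHomogeneousDist ρ)

include hρ

theorem profile_sq_mul {l : ℝ} (hl : 0 ≤ l) (s t : ℝ) :
    profile ρ (l ^ 2 * s) (l ^ 2 * t) = l * profile ρ s t := by
  rw [profile, profile, ← hρ.zero_heisDil hl, heisDil]
  refine congrArg (ρ 0) (Prod.ext (funext fun _ => ?_) (Prod.ext (smul_zero l).symm rfl))
  change √(l ^ 2 * s / n) = l * √(s / n)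
  rw [mul_div_assoc, Real.sqrt_mul (sq_nonneg l), Real.sqrt_sq hl]

theorem continuous_profile : Continuous (Function.uncurry (profile ρ)) :=
  (hρ.continuous 0).comp (f := fun q : ℝ × ℝ => (fun _ => √(q.1 / n), 0, q.2)) (by fun_prop)

theorem profile_zero_zero : profile ρ 0 0 = 0 := by
  rw [profile, zero_div, Real.sqrt_zero]
  exact hρ.self_eq_zero 0

theorem exists_le_of_profile_le_one (hn : n ≠ 0) :
    ∃ R : ℝ, ∀ s t, profile ρ s t ≤ 1 → s ≤ R ∧ |t| ≤ R := by
  obtain ⟨c, hc, hle⟩ := hρ.exists_mul_heisGauge_le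
  refine ⟨max (n * c⁻¹ ^ 2) (c⁻¹ ^ 2), fun s t hst => ?_⟩
  have hgauge : heisGauge ((fun _ => √(s / n), 0, t) : Heis n) ≤ c⁻¹ := by
    rw [← mul_one c⁻¹, le_inv_mul_iff₀ hc]
    exact (hle _).trans hst
  have := Fin.pos_iff_nonempty.1 (Nat.pos_of_ne_zero hn)
  constructor
  · have hnorm : √(s / n) ≤ c⁻¹ := by
      refine le_trans ?_ (((le_max_left _ _).trans (le_max_left _ _)).trans hgauge)
      rw [pi_norm_const]
      exact le_abs_self _
    rw [Real.sqrt_le_left (by positivity), div_le_iff₀' (by positivity)] at hnorm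
    exact hnorm.trans (le_max_left _ _)
  · exact ((abs_snd_snd_le_heisGauge_sq (n := n) (fun _ => √(s / n), 0, t)).trans
      (pow_le_pow_left₀ (heisGauge_nonneg _) hgauge 2)).trans (le_max_right _ _)

end IsHomogeneousDist

section SectionVolume

variable {n : ℕ} {ρ : Heis n → Heis n → ℝ}

/-- The Lebesgue measure of the section of a `ρ`-ball of radius `r` by an `(m+1)`-dimensional
vertical subgroup at squared distance `β` from its centre. -/
noncomputable def sectionVolume (ρ : Heis n → Heis n → ℝ) (m : ℕ) (β r : ℝ) : ℝ≥0∞ :=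
  volume {q : EuclideanSpace ℝ (Fin m) × ℝ | profile ρ (‖q.1‖ ^ 2 + β) q.2 ≤ r}

/-- The spherical Federer density of the Haar measure of `(m+1)`-dimensional vertical subgroups:
the largest normalised measure of their intersection with a ball, centred anywhere. By homogeneity
it suffices to consider balls of radius one, of diameter bound `2`. -/
noncomputable def verticalDensity (ρ : Heis n → Heis n → ℝ) (m : ℕ) : ℝ≥0∞ :=
  ⨆ (β : ℝ) (_ : 0 ≤ β), sectionVolume ρ m β 1 / 2 ^ (m + 2)

instance isAddHaarMeasure_volume_prod_real (m : ℕ) :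
    (volume : Measure (EuclideanSpace ℝ (Fin m) × ℝ)).IsAddHaarMeasure :=
  Measure.prod.instIsAddHaarMeasure volume volume

theorem volume_preimage_parabolic_dilation (m : ℕ) {l : ℝ} (hl : 0 < l)
    (s : Set (EuclideanSpace ℝ (Fin m) × ℝ)) :
    volume ((fun q : EuclideanSpace ℝ (Fin m) × ℝ => (l⁻¹ • q.1, (l ^ 2)⁻¹ * q.2)) ⁻¹' s) =
      ENNReal.ofReal l ^ (m + 2) * volume s := by
  let δ : EuclideanSpace ℝ (Fin m) × ℝ →ₗ[ℝ] EuclideanSpace ℝ (Fin m) × ℝ :=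
    (l⁻¹ • LinearMap.id).prodMap ((l ^ 2)⁻¹ • LinearMap.id)
  have det_inv : (LinearMap.det δ)⁻¹ = l ^ (m + 2) := by
    rw [LinearMap.det_prodMap, LinearMap.det_smul, LinearMap.det_smul]
    simp [pow_add, mul_comm]
  have det_ne_zero : LinearMap.det δ ≠ 0 :=
    fun h => pow_ne_zero (m + 2) hl.ne' (by rw [← det_inv, h, inv_zero])
  have := Measure.addHaar_preimage_linearMap volume det_ne_zero s
  rwa [det_inv, abs_of_pos (by positivity), ENNReal.ofReal_pow hl.le] at this

namespace IsHomogeneousDist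

variable (hρ : IsHomogeneousDist ρ) (m : ℕ)

include hρ

theorem sectionVolume_sq_mul {l : ℝ} (hl : 0 < l) (β : ℝ) :
    sectionVolume ρ m (l ^ 2 * β) l = ENNReal.ofReal l ^ (m + 2) * sectionVolume ρ m β 1 := by
  rw [sectionVolume, sectionVolume, ← volume_preimage_parabolic_dilation m hl]
  congr 1 with q
  have hscale : profile ρ (‖q.1‖ ^ 2 + l ^ 2 * β) q.2 =
      l * profile ρ (‖l⁻¹ • q.1‖ ^ 2 + β) ((l ^ 2)⁻¹ * q.2) := by
    rw [← hρ.profile_sq_mul hl.le, norm_smul, Real.norm_of_nonneg (inv_nonneg.2 hl.le)]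
    congr 1 <;> field_simp
  rw [mem_ofPred_eq, mem_preimage, mem_ofPred_eq, hscale, mul_le_iff_le_one_right hl]

theorem verticalDensity_ne_top (hn : n ≠ 0) : verticalDensity ρ m ≠ ⊤ := by
  obtain ⟨R, hR⟩ := hρ.exists_le_of_profile_le_one hn
  have section_subset : ∀ β : ℝ, 0 ≤ β →
      {q : EuclideanSpace ℝ (Fin m) × ℝ | profile ρ (‖q.1‖ ^ 2 + β) q.2 ≤ 1} ⊆
        closedBall 0 √R ×ˢ closedBall 0 R := fun β hβ q hq => by
    obtain ⟨hq1, hq2⟩ := hR _ _ hq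
    exact ⟨mem_closedBall_zero_iff.2 (Real.le_sqrt_of_sq_le (by linarith)),
      mem_closedBall_zero_iff.2 hq2⟩
  refine ne_top_of_le_ne_top (b := volume (closedBall (0 : EuclideanSpace ℝ (Fin m)) √R ×ˢ
    closedBall (0 : ℝ) R) / 2 ^ (m + 2)) ?_ (iSup₂_le fun β hβ =>
      ENNReal.div_le_div_right (measure_mono (section_subset β hβ)) _)
  exact ENNReal.div_ne_top
    ((isCompact_closedBall _ _).prod (isCompact_closedBall _ _)).measure_ne_top (by simp)

theorem verticalDensity_ne_zero : verticalDensity ρ m ≠ 0 := by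
  have isOpen_section :
      IsOpen {q : EuclideanSpace ℝ (Fin m) × ℝ | profile ρ (‖q.1‖ ^ 2 + 0) q.2 < 1} :=
    isOpen_lt (hρ.continuous_profile.comp₂ (by fun_prop) continuous_snd) continuous_const
  have section_pos : 0 < sectionVolume ρ m 0 1 :=
    (isOpen_section.measure_pos volume ⟨0, by simp [hρ.profile_zero_zero]⟩).trans_le
      (measure_mono fun q (hq : profile ρ _ _ < 1) => hq.le)
  have : 0 < sectionVolume ρ m 0 1 / 2 ^ (m + 2) := ENNReal.div_pos section_pos.ne' (by simp)
  exact (this.trans_le (le_iSup₂_of_le 0 le_rfl le_rfl)).ne'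

end IsHomogeneousDist

end SectionVolume

section EuclideanSubspaces

variable {E : Type*} [NormedAddCommGroup E] [InnerProductSpace ℝ E] [FiniteDimensional ℝ E]

theorem exists_linearIsometry_range_eq (S : Submodule ℝ E) {m : ℕ} (hS : Module.finrank ℝ S = m) :
    ∃ U : EuclideanSpace ℝ (Fin m) →ₗᵢ[ℝ] E, U.toLinearMap.range = S := by
  let basis := (stdOrthonormalBasis ℝ S).reindex (finCongr hS)
  refine ⟨S.subtypeₗᵢ.comp basis.repr.symm.toLinearIsometry, ?_⟩
  ext w
  exact ⟨by rintro ⟨v, rfl⟩; exact (basis.repr.symm v).2,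
    fun hw => ⟨basis.repr ⟨w, hw⟩, by simp⟩⟩

theorem exists_mem_orthogonal_norm_eq {S : Submodule ℝ E} (hS : S ≠ ⊤) {a : ℝ} (ha : 0 ≤ a) :
    ∃ w ∈ Sᗮ, ‖w‖ = a := by
  have : Nontrivial Sᗮ :=
    Submodule.nontrivial_iff_ne_bot.2 (Submodule.orthogonal_eq_bot_iff.not.2 hS)
  obtain ⟨w, hw⟩ := exists_norm_eq Sᗮ ha
  exact ⟨w, w.2, hw⟩

end EuclideanSubspaces

theorem volume_preimage_shear {m : ℕ} (x : EuclideanSpace ℝ (Fin m))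
    {g : EuclideanSpace ℝ (Fin m) → ℝ} (hg : Measurable g)
    {s : Set (EuclideanSpace ℝ (Fin m) × ℝ)} (hs : MeasurableSet s) :
    volume ((fun q : EuclideanSpace ℝ (Fin m) × ℝ => (q.1 - x, q.2 + g q.1)) ⁻¹' s) = volume s :=
  ((measurePreserving_sub_right volume x).skew_product (g := fun v t => t + g v) (by fun_prop)
    (.of_forall fun v => (measurePreserving_add_right volume (g v)).map_eq)).measure_preimage
    hs.nullMeasurableSet

theorem div_two_pow_mul_ofReal_two_mul_rpow (Q : ℝ≥0∞) (m : ℕ) (r : ℝ) :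
    Q / 2 ^ (m + 2) * ENNReal.ofReal (2 * r) ^ ((m : ℝ) + 2) = ENNReal.ofReal r ^ (m + 2) * Q := by
  rw [ENNReal.ofReal_mul zero_le_two, ENNReal.ofReal_ofNat,
    show (m : ℝ) + 2 = ((m + 2 : ℕ) : ℝ) by norm_num, ENNReal.rpow_natCast, mul_pow, ← mul_assoc,
    ENNReal.div_mul_cancel (by simp) (by simp), mul_comm]

section VerticalMap

variable {n m : ℕ} (U : EuclideanSpace ℝ (Fin m) →ₗᵢ[ℝ] EuclideanSpace ℝ (Fin n ⊕ Fin n))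

/-- The Euclidean isometric parametrisation of the vertical subgroup over the range of `U`. -/
noncomputable def verticalMap (q : EuclideanSpace ℝ (Fin m) × ℝ) : Heis n := heisMk (U q.1) q.2

theorem range_verticalMap :
    range (verticalMap U) =
      {p | (p.1, p.2.1) ∈ U.toLinearMap.range.map (horizontalEquiv n).toLinearMap} := by
  ext p
  constructor
  · rintro ⟨q, rfl⟩
    exact ⟨U q.1, ⟨q.1, rfl⟩, rfl⟩
  · rintro ⟨_, ⟨v, rfl⟩, hv⟩
    obtain ⟨hx, hy⟩ := Prod.ext_iff.1 hv
    exact ⟨(v, p.2.2), Prod.ext hx (Prod.ext hy rfl)⟩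

theorem measurableEmbedding_verticalMap : MeasurableEmbedding (verticalMap U) := by
  refine Continuous.measurableEmbedding ?_ fun q q' h => ?_
  · have := continuous_horizontalEquiv (n := n)
    have := U.continuous
    unfold verticalMap heisMk
    fun_prop
  · obtain ⟨h1, h2⟩ := heisMk_injective2 h
    exact Prod.ext (U.injective h1) h2

theorem exists_eq_heisMk_add (p : Heis n) :
    ∃ x, ∃ w ∈ U.toLinearMap.rangeᗮ, ∃ t, p = heisMk (U x + w) t := by
  obtain ⟨v, t, rfl⟩ := exists_eq_heisMk p
  obtain ⟨_, ⟨x, rfl⟩, w, hw, rfl⟩ := U.toLinearMap.range.exists_add_mem_mem_orthogonal v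
  exact ⟨x, w, hw, t, rfl⟩

theorem linearIsometry_range_ne_top (hm : m < 2 * n) : U.toLinearMap.range ≠ ⊤ := fun h => by
  have finrank_range := LinearMap.finrank_range_of_inj U.injective
  rw [h, finrank_top] at finrank_range
  simp only [finrank_euclideanSpace, Fintype.card_sum, Fintype.card_fin] at finrank_range
  omega

variable {U} {ρ : Heis n → Heis n → ℝ} (hρ : IsHomogeneousDist ρ) (hrot : IsRotationInvariant ρ)
  (hn : n ≠ 0)

include hρ hrot hn

theorem IsHomogeneousDist.dist_verticalMap {w : EuclideanSpace ℝ (Fin n ⊕ Fin n)}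
    (hw : w ∈ U.toLinearMap.rangeᗮ) (x : EuclideanSpace ℝ (Fin m)) (s : ℝ)
    (q : EuclideanSpace ℝ (Fin m) × ℝ) :
    ρ (heisMk (U x + w) s) (verticalMap U q) =
      profile ρ (‖q.1 - x‖ ^ 2 + ‖w‖ ^ 2) (q.2 + (-s + halfSymplectic (-(U x + w)) (U q.1))) := by
  have orthogonal : inner ℝ (U (q.1 - x)) (-w) = 0 :=
    Submodule.inner_right_of_mem_orthogonal (U.toLinearMap.mem_range_self (q.1 - x)) (neg_mem hw)
  have norm_sq : ‖-(U x + w) + U q.1‖ ^ 2 = ‖q.1 - x‖ ^ 2 + ‖w‖ ^ 2 := by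
    rw [show -(U x + w) + U q.1 = U (q.1 - x) + -w by rw [map_sub]; abel, sq, sq, sq,
      norm_add_sq_eq_norm_sq_add_norm_sq_of_inner_eq_zero _ _ orthogonal, U.norm_map, norm_neg]
  rw [hρ.eq_zero_heisMul, verticalMap, neg_heisMk, heisMul_heisMk, hrot.zero_heisMk hn, norm_sq]
  congr 1
  ring

theorem IsHomogeneousDist.volume_preimage_verticalMap {w : EuclideanSpace ℝ (Fin n ⊕ Fin n)}
    (hw : w ∈ U.toLinearMap.rangeᗮ) (x : EuclideanSpace ℝ (Fin m)) (s r : ℝ) :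
    volume {q | ρ (heisMk (U x + w) s) (verticalMap U q) ≤ r} =
      sectionVolume ρ m (‖w‖ ^ 2) r := by
  have continuous_shear : Continuous fun v => -s + halfSymplectic (-(U x + w)) (U v) :=
    continuous_const.add ((continuous_halfSymplectic _).comp U.continuous)
  have isClosed_section : IsClosed
      {q : EuclideanSpace ℝ (Fin m) × ℝ | profile ρ (‖q.1‖ ^ 2 + ‖w‖ ^ 2) q.2 ≤ r} :=
    isClosed_le (hρ.continuous_profile.comp₂ (by fun_prop) continuous_snd) continuous_const
  rw [sectionVolume,
    ← volume_preimage_shear x continuous_shear.measurable isClosed_section.measurableSet]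
  simp only [hρ.dist_verticalMap hrot hn hw, preimage_ofPred_eq]

theorem IsHomogeneousDist.map_verticalMap_closedBall {w : EuclideanSpace ℝ (Fin n ⊕ Fin n)}
    (hw : w ∈ U.toLinearMap.rangeᗮ) (x : EuclideanSpace ℝ (Fin m)) (s : ℝ) {r : ℝ} (hr : 0 < r) :
    volume.map (verticalMap U) {p | ρ (heisMk (U x + w) s) p ≤ r} =
      ENNReal.ofReal r ^ (m + 2) * sectionVolume ρ m ((‖w‖ / r) ^ 2) 1 := by
  have norm_sq : ‖w‖ ^ 2 = r ^ 2 * (‖w‖ / r) ^ 2 := by field_simp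
  rw [(measurableEmbedding_verticalMap U).map_apply, ← hρ.sectionVolume_sq_mul m hr, ← norm_sq,
    ← hρ.volume_preimage_verticalMap hrot hn hw x s, preimage_ofPred_eq]

theorem IsHomogeneousDist.hasSphericalDensity_verticalMap (hm : m < 2 * n) :
    letI := hρ.toPseudoMetricSpace
    HasSphericalDensity (volume.map (verticalMap U)) (m + 2) (verticalDensity ρ m)
      (range (verticalMap U)) := by
  let := hρ.toPseudoMetricSpace
  have closedBall_eq : ∀ p r, closedBall p r = {q | ρ p q ≤ r} := fun p r => by
    ext; exact mem_closedBall'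
  refine ⟨fun z r hr => ?_, fun q hq => ?_⟩
  · obtain ⟨x, w, hw, s, rfl⟩ := exists_eq_heisMk_add U z
    rw [closedBall_eq, hρ.map_verticalMap_closedBall hrot hn hw x s hr,
      ← div_two_pow_mul_ofReal_two_mul_rpow]
    gcongr
    exact le_iSup₂_of_le _ (sq_nonneg (‖w‖ / r)) le_rfl
  · simp only [verticalDensity, lt_iSup_iff] at hq
    obtain ⟨β, hβ, hqβ⟩ := hq
    refine ⟨profile ρ β 0, hρ.nonneg _ _, ?_⟩
    rintro _ ⟨p, rfl⟩ r hr
    obtain ⟨w, hw, hwr⟩ := exists_mem_orthogonal_norm_eq (linearIsometry_range_ne_top U hm)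
      (mul_nonneg hr.le (Real.sqrt_nonneg β))
    have norm_div_sq : (‖w‖ / r) ^ 2 = β := by
      rw [hwr, mul_div_cancel_left₀ _ hr.ne', Real.sq_sqrt hβ]
    have norm_sq : ‖w‖ ^ 2 = r ^ 2 * β := by rw [← norm_div_sq]; field_simp
    refine ⟨heisMul (verticalMap U p) (heisMk w 0), le_of_eq ?_, ?_⟩
    · calc ρ (verticalMap U p) (heisMul (verticalMap U p) (heisMk w 0))
          = profile ρ (r ^ 2 * β) (r ^ 2 * 0) := by
            rw [hρ.heisMul_right, hrot.zero_heisMk hn, norm_sq, mul_zero]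
        _ = profile ρ β 0 * r := by rw [hρ.profile_sq_mul hr.le, mul_comm]
    · rw [verticalMap, heisMul_heisMk, closedBall_eq,
        hρ.map_verticalMap_closedBall hrot hn hw p.1 _ hr, norm_div_sq,
        ← div_two_pow_mul_ofReal_two_mul_rpow]
      gcongr

end VerticalMap

theorem IsHomogeneousDist.verticalDensity_mul_sphMeasFun_image {n m : ℕ}
    {ρ : Heis n → Heis n → ℝ} (hρ : IsHomogeneousDist ρ) (hrot : IsRotationInvariant ρ)
    (hm : m < 2 * n) (U : EuclideanSpace ℝ (Fin m) →ₗᵢ[ℝ] EuclideanSpace ℝ (Fin n ⊕ Fin n))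
    (A : Set (EuclideanSpace ℝ (Fin m) × ℝ)) :
    verticalDensity ρ m * sphMeasFun ρ (m + 2) (verticalMap U '' A) = volume A := by
  let := hρ.toPseudoMetricSpace
  have hn : n ≠ 0 := by omega
  have embedding := measurableEmbedding_verticalMap U
  rw [← preimage_image_eq A embedding.injective, ← embedding.map_apply,
    preimage_image_eq A embedding.injective]
  exact (hρ.hasSphericalDensity_verticalMap hrot hn hm).mul_sphMeasFun_eq_measure (by positivity)
    (hρ.verticalDensity_ne_zero m) (hρ.verticalDensity_ne_top m hn) (image_subset_range _ _)

theorem exists_hausMeasFun_image_verticalMap (m : ℕ) : ∃ κ : ℝ≥0∞, κ ≠ 0 ∧ κ ≠ ⊤ ∧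
    ∀ {n : ℕ} (U : EuclideanSpace ℝ (Fin m) →ₗᵢ[ℝ] EuclideanSpace ℝ (Fin n ⊕ Fin n)) A,
      hausMeasFun heisEuclDist (m + 1) (verticalMap U '' A) = κ * volume A := by
  let e := WithLp.prodContinuousLinearEquiv 2 ℝ (EuclideanSpace ℝ (Fin m)) ℝ
  have finrank_eq : Module.finrank ℝ (WithLp 2 (EuclideanSpace ℝ (Fin m) × ℝ)) = m + 1 := by
    rw [e.toLinearEquiv.finrank_eq]
    simp
  obtain ⟨κ, hκ0, hκt, hκ⟩ := exists_hausdorffMeasure_preimage_eq_mul e volume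
  refine ⟨κ, hκ0, hκt, fun {n} U A => ?_⟩
  have isometry : (fun p q => heisEuclDist (verticalMap U (e p)) (verticalMap U (e q))) = dist := by
    ext p q
    rw [verticalMap, verticalMap, heisEuclDist_heisMk, U.dist_map, WithLp.prod_dist_eq_of_L2]
    rfl
  have preimage_image : (fun p => verticalMap U (e p)) '' (e ⁻¹' A) = verticalMap U '' A := by
    rw [← image_image, image_preimage_eq A e.surjective]
  rw [← hκ, ← preimage_image, hausMeasFun_image _ _ (by positivity), isometry,
    hausMeasFun_dist (by positivity), finrank_eq, Nat.cast_succ]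

theorem exists_linearIsometry_range_verticalMap_eq {n m : ℕ}
    {P₀ : Submodule ℝ ((Fin n → ℝ) × (Fin n → ℝ))} (hP₀ : Module.finrank ℝ P₀ = m) :
    ∃ U : EuclideanSpace ℝ (Fin m) →ₗᵢ[ℝ] EuclideanSpace ℝ (Fin n ⊕ Fin n),
      range (verticalMap U) = {p | (p.1, p.2.1) ∈ P₀} := by
  obtain ⟨U, hU⟩ := exists_linearIsometry_range_eq
    (P₀.map (horizontalEquiv n).symm.toLinearMap) ((LinearEquiv.finrank_map_eq _ _).trans hP₀)
  refine ⟨U, ?_⟩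
  rw [range_verticalMap, hU, ← Submodule.map_comp]
  simp

theorem spherical_eq_euclidean_hausdorff_on_vertical_subgroups_general
    (n k : ℕ) (hk : 1 ≤ k) (hkn : k ≤ 2 * n) (ρ : Heis n → Heis n → ℝ)
    (hρ : IsHomogeneousDist ρ) (hrot : IsRotationInvariant ρ) :
    ∃ c : ℝ≥0∞, 0 < c ∧ c < ⊤ ∧
      ∀ P₀ : Submodule ℝ ((Fin n → ℝ) × (Fin n → ℝ)),
        Module.finrank ℝ P₀ = 2 * n - k →
        ∀ E : Set (Heis n),
          c * sphMeasFun ρ (2 * (n : ℝ) + 2 - k)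
              (E ∩ {p : Heis n | (p.1, p.2.1) ∈ P₀}) =
            hausMeasFun heisEuclDist (2 * (n : ℝ) + 1 - k)
              (E ∩ {p : Heis n | (p.1, p.2.1) ∈ P₀}) := by
  obtain ⟨m, hm⟩ : ∃ m, m + k = 2 * n := ⟨2 * n - k, Nat.sub_add_cancel hkn⟩
  have hm_real : (m : ℝ) + k = 2 * n := by exact_mod_cast hm
  obtain ⟨κ, hκ0, hκt, hκ⟩ := exists_hausMeasFun_image_verticalMap m
  refine ⟨κ * verticalDensity ρ m,
    ENNReal.mul_pos hκ0 (hρ.verticalDensity_ne_zero m),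
    ENNReal.mul_lt_top hκt.lt_top (hρ.verticalDensity_ne_top m (by omega)).lt_top,
    fun P₀ hP₀ E => ?_⟩
  obtain ⟨U, hU⟩ := exists_linearIsometry_range_verticalMap_eq (m := m) (hP₀.trans (by omega))
  rw [← hU, ← image_preimage_eq_inter_range, mul_assoc,
    show 2 * (n : ℝ) + 2 - k = m + 2 by linarith, show 2 * (n : ℝ) + 1 - k = m + 1 by linarith,
    hρ.verticalDensity_mul_sphMeasFun_image hrot (by omega) U, hκ]

/-- In the Heisenberg group `H^n` endowed with a rotationally invariant homogeneous
distance `ρ`, for each `1 ≤ k ≤ n` there is a constant `c(n,k) > 0` such that for every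
vertical subgroup `P ∈ 𝒯_{H^n, ℝ^k}` (that is, `P = P₀ × V₂` with `P₀` a `(2n-k)`-dimensional
subspace of the horizontal layer) one has
`c(n,k) · S^(2n+2-k) ⌞ P = H_E^(2n+1-k) ⌞ P`,
where `H_E` is the Euclidean Hausdorff measure on `ℝ^(2n+1) ≅ H^n`. -/
theorem spherical_eq_euclidean_hausdorff_on_vertical_subgroups
    (n k : ℕ) (hk : 1 ≤ k) (hkn : k ≤ n)
    (ρ : Heis n → Heis n → ℝ)
    (hρ_zero : ∀ p q : Heis n, ρ p q = 0 ↔ p = q)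
    (hρ_symm : ∀ p q : Heis n, ρ p q = ρ q p)
    (hρ_triangle : ∀ p q r : Heis n, ρ p r ≤ ρ p q + ρ q r)
    (hρ_left : ∀ g p q : Heis n, ρ (heisMul g p) (heisMul g q) = ρ p q)
    (hρ_hom : ∀ lam : ℝ, 0 < lam → ∀ p q : Heis n,
      ρ (heisDil lam p) (heisDil lam q) = lam * ρ p q)
    (hρ_rot : ∀ (x y x' y' : Fin n → ℝ) (t : ℝ), horSq x y = horSq x' y' →
      ρ 0 (x, y, t) = ρ 0 (x', y', t)) :
    ∃ c : ℝ≥0∞, 0 < c ∧ c < ⊤ ∧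
      ∀ P₀ : Submodule ℝ ((Fin n → ℝ) × (Fin n → ℝ)),
        Module.finrank ℝ P₀ = 2 * n - k →
        ∀ E : Set (Heis n),
          c * sphMeasFun ρ (2 * (n : ℝ) + 2 - k)
              (E ∩ {p : Heis n | (p.1, p.2.1) ∈ P₀}) =
            hausMeasFun heisEuclDist (2 * (n : ℝ) + 1 - k)
              (E ∩ {p : Heis n | (p.1, p.2.1) ∈ P₀}) :=
  spherical_eq_euclidean_hausdorff_on_vertical_subgroups_general n k hk (by omega) ρ
    ⟨hρ_zero, hρ_symm, hρ_triangle, hρ_left, hρ_hom⟩ hρ_rot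
end
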